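/- arXiv:1003.5072 — 2 statements merged into one kernel-verified Lean document; each statement's English description precedes it below -/
import Mathlib

section
/- Let n ≥ 1 and let f : ℝ^n → ℝ be a smooth function with 0 < a ≤ f ≤ b for some constants a, b and with bounded first and second derivatives. Then for every t > 0 and every x ∈ ℝ^n one has 1 − (2t/n) · P_t(f Δ(log f))(x)/P_t f(x) > 0 and P_t(f log f)(x) − P_t f(x) · log P_t f(x) ≤ t · Δ(P_t f)(x) + (n/2) · P_t f(x) · log( 1 − (2t/n) · P_t(f Δ(log f))(x)/P_t f(x) ) (dimensional local logarithmic Sobolev inequality for the Euclidean heat semigroup, expressing its CD(0,n) property). -/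
open MeasureTheory Real

/-- Euclidean heat semigroup, with `heat n 0 f = f`. -/
noncomputable def heat (n : ℕ) (t : ℝ) (f : EuclideanSpace ℝ (Fin n) → ℝ)
    (x : EuclideanSpace ℝ (Fin n)) : ℝ :=
  if t = 0 then f x
  else (4 * π * t) ^ (-(n : ℝ) / 2) * ∫ y, f y * Real.exp (-‖x - y‖ ^ 2 / (4 * t))

/-- Laplacian on `ℝ^n` as the sum of second derivatives in the coordinate directions. -/
noncomputable def laplacian (n : ℕ) (f : EuclideanSpace ℝ (Fin n) → ℝ)
    (x : EuclideanSpace ℝ (Fin n)) : ℝ :=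
  ∑ i : Fin n,
    fderiv ℝ (fderiv ℝ f) x (EuclideanSpace.single i 1) (EuclideanSpace.single i 1)

open ProbabilityTheory Module
open scoped RealInnerProductSpace

section Gaussian

variable {E : Type*} [NormedAddCommGroup E] [InnerProductSpace ℝ E]

variable (E) in
/-- The Lebesgue density of the standard Gaussian measure. -/
noncomputable def stdGaussianDensity (w : E) : ℝ :=
  (2 * π) ^ (-(finrank ℝ E : ℝ) / 2) * Real.exp (-‖w‖ ^ 2 / 2)

lemma stdGaussianDensity_pos (w : E) : 0 < stdGaussianDensity E w := by
  unfold stdGaussianDensity; positivity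

lemma continuous_stdGaussianDensity : Continuous (stdGaussianDensity E) := by
  unfold stdGaussianDensity; fun_prop

lemma hasFDerivAt_stdGaussianDensity (w : E) :
    HasFDerivAt (stdGaussianDensity E) (-stdGaussianDensity E w • innerSL ℝ w) w := by
  unfold stdGaussianDensity
  have h := (((hasStrictFDerivAt_norm_sq w).hasFDerivAt.neg.mul_const (1 / 2 : ℝ)).exp).const_mul
    ((2 * π) ^ (-(finrank ℝ E : ℝ) / 2))
  convert! h using 1
  · ext v; simp [div_eq_mul_inv]
  · ext v; simp [div_eq_mul_inv]; ring

variable [MeasurableSpace E] [BorelSpace E]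

lemma measurable_stdGaussianDensity :
    Measurable fun w : E => ENNReal.ofReal (stdGaussianDensity E w) :=
  (continuous_stdGaussianDensity.measurable).ennreal_ofReal

variable [FiniteDimensional ℝ E]

lemma integrable_stdGaussianDensity : Integrable (stdGaussianDensity E) := by
  unfold stdGaussianDensity
  refine Integrable.const_mul ?_ _
  have h := GaussianFourier.integrable_cexp_neg_mul_sq_norm_add
    (b := (1 / 2 : ℂ)) (by norm_num) 0 (0 : E)
  refine h.norm.congr (Filter.Eventually.of_forall fun w => ?_)
  simp only [Complex.norm_exp]
  congr 1
  simp [← Complex.ofReal_pow]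
  ring

lemma stdGaussian_eq_withDensity :
    stdGaussian E =
      volume.withDensity fun w : E => ENNReal.ofReal (stdGaussianDensity E w) := by
  have : IsFiniteMeasure
      (volume.withDensity fun w : E => ENNReal.ofReal (stdGaussianDensity E w)) :=
    isFiniteMeasure_withDensity_ofReal integrable_stdGaussianDensity.2
  apply Measure.ext_of_charFun
  ext u
  rw [charFun_stdGaussian, charFun_apply,
    integral_withDensity_eq_integral_toReal_smul measurable_stdGaussianDensity (by simp)]
  have h := GaussianFourier.integral_cexp_neg_mul_sq_norm_add
    (b := (1 / 2 : ℂ)) (by norm_num) Complex.I u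
  have key : ∀ w : E, (ENNReal.ofReal (stdGaussianDensity E w)).toReal •
      Complex.exp (⟪w, u⟫ * Complex.I) =
      (((2 * π) ^ (-(finrank ℝ E : ℝ) / 2) : ℝ) : ℂ) *
        Complex.exp (-(1 / 2 : ℂ) * ‖w‖ ^ 2 + Complex.I * ⟪u, w⟫) := by
    intro w
    rw [ENNReal.toReal_ofReal (stdGaussianDensity_pos w).le, stdGaussianDensity, Complex.real_smul,
      Complex.exp_add, real_inner_comm]
    push_cast
    rw [mul_comm Complex.I]
    ring_nf
  simp_rw [key]
  rw [integral_const_mul, h]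
  have h2 : ((π : ℂ) / (1 / 2)) ^ ((finrank ℝ E : ℂ) / 2) =
      (((2 * π) ^ ((finrank ℝ E : ℝ) / 2) : ℝ) : ℂ) := by
    rw [Complex.ofReal_cpow (by positivity)]
    push_cast
    ring_nf
  rw [h2, ← mul_assoc, ← Complex.ofReal_mul, ← Real.rpow_add (by positivity)]
  simp [neg_div]
  norm_num

lemma integral_stdGaussian (g : E → ℝ) :
    ∫ w, g w ∂(stdGaussian E) = ∫ w, stdGaussianDensity E w * g w := by
  rw [stdGaussian_eq_withDensity,
    integral_withDensity_eq_integral_toReal_smul measurable_stdGaussianDensity (by simp)]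
  simp [ENNReal.toReal_ofReal (stdGaussianDensity_pos _).le]

lemma integrable_stdGaussian_iff {g : E → ℝ} :
    Integrable g (stdGaussian E) ↔ Integrable fun w => stdGaussianDensity E w * g w := by
  rw [stdGaussian_eq_withDensity,
    integrable_withDensity_iff_integrable_smul' measurable_stdGaussianDensity (by simp)]
  simp [ENNReal.toReal_ofReal (stdGaussianDensity_pos _).le]

/-- Gaussian integration by parts. -/
lemma integral_inner_mul_stdGaussian {h : E → ℝ} (v : E) (hd : Differentiable ℝ h)
    (h0 : Integrable h (stdGaussian E)) (h1 : Integrable (fun w => ⟪w, v⟫ * h w) (stdGaussian E))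
    (h2 : Integrable (fun w => fderiv ℝ h w v) (stdGaussian E)) :
    ∫ w, ⟪w, v⟫ * h w ∂(stdGaussian E) = ∫ w, fderiv ℝ h w v ∂(stdGaussian E) := by
  rw [integrable_stdGaussian_iff] at h0 h1 h2
  have hfd (w : E) : fderiv ℝ (stdGaussianDensity E) w v = -(stdGaussianDensity E w * ⟪w, v⟫) := by
    rw [(hasFDerivAt_stdGaussianDensity w).fderiv]; simp
  have := integral_mul_fderiv_eq_neg_fderiv_mul_of_integrable (μ := (volume : Measure E))
    (f := stdGaussianDensity E) (g := h) (v := v) ?_ h2 h0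
    (fun w _ => (hasFDerivAt_stdGaussianDensity w).differentiableAt) (fun w _ => hd w)
  · rw [integral_stdGaussian, integral_stdGaussian, this, ← integral_neg]
    congr 1; ext w; rw [hfd]; ring
  · refine h1.neg.congr (Filter.Eventually.of_forall fun w => ?_)
    simp only [hfd, Pi.neg_apply]; ring

lemma integrable_stdGaussian_of_norm_le {F : Type*} [NormedAddCommGroup F] {g : E → F} (C : ℝ)
    (hg : AEStronglyMeasurable g (stdGaussian E)) (h : ∀ w, ‖g w‖ ≤ C * (1 + ‖w‖ ^ 2)) :
    Integrable g (stdGaussian E) := by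
  have h2 : Integrable (fun w : E => ‖w‖ ^ 2) (stdGaussian E) :=
    (IsGaussian.memLp_two_id (μ := stdGaussian E)).integrable_norm_pow (by norm_num)
  exact (((integrable_const 1).add h2).const_mul C).mono' hg (Filter.Eventually.of_forall h)

/-- Rotation invariance of pairs of independent standard Gaussian vectors. -/
lemma integrable_and_integral_rotation_stdGaussian {q : E → ℝ} (hq : Continuous q)
    (hi : Integrable q (stdGaussian E)) (θ : ℝ) :
    Integrable (fun w => ∫ v, q (Real.sin θ • w + Real.cos θ • v) ∂(stdGaussian E))
      (stdGaussian E) ∧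
    ∫ w, ∫ v, q (Real.sin θ • w + Real.cos θ • v) ∂(stdGaussian E) ∂(stdGaussian E) =
      ∫ w, q w ∂(stdGaussian E) := by
  have hrot := IsGaussian.map_rotation_eq_self (μ := stdGaussian E)
    (by simp) (π / 2 - θ)
  have hmp : MeasurePreserving (ContinuousLinearMap.rotation (E := E) (π / 2 - θ))
      ((stdGaussian E).prod (stdGaussian E)) ((stdGaussian E).prod (stdGaussian E)) :=
    ⟨by fun_prop, hrot⟩
  have hi' := hmp.integrable_comp_of_integrable (hi.comp_fst (stdGaussian E))
  have he : ((fun p : E × E => q p.1) ∘ (ContinuousLinearMap.rotation (E := E) (π / 2 - θ))) =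
      fun p => q (Real.sin θ • p.1 + Real.cos θ • p.2) := by
    ext p
    simp [ContinuousLinearMap.rotation_apply, Real.cos_pi_div_two_sub, Real.sin_pi_div_two_sub]
  rw [he] at hi'
  refine ⟨hi'.integral_prod_left, ?_⟩
  rw [← integral_prod _ hi', ← he]
  have := integral_map (μ := (stdGaussian E).prod (stdGaussian E))
    (φ := ContinuousLinearMap.rotation (E := E) (π / 2 - θ)) (f := fun p : E × E => q p.1)
    (by fun_prop) (by fun_prop)
  rw [hrot] at this
  simp only [Function.comp_def]
  rw [← this, integral_fun_fst]
  simp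

end Gaussian

lemma heat_eq_integral_stdGaussian {n : ℕ} {t : ℝ} (ht : 0 < t)
    (g : EuclideanSpace ℝ (Fin n) → ℝ) (x : EuclideanSpace ℝ (Fin n)) :
    heat n t g x =
      ∫ w, g (x + √(2 * t) • w) ∂(stdGaussian (EuclideanSpace ℝ (Fin n))) := by
  have hc : 0 < √(2 * t) := by positivity
  rw [heat, if_neg ht.ne', integral_stdGaussian]
  set k : EuclideanSpace ℝ (Fin n) → ℝ := fun y => g (x + y) * Real.exp (-‖y‖ ^ 2 / (4 * t))
  have h1 : ∫ y, g y * Real.exp (-‖x - y‖ ^ 2 / (4 * t)) = ∫ y, k y := by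
    rw [← integral_add_left_eq_self _ x]
    simp [k]
  have h2 := Measure.integral_comp_smul (volume : Measure (EuclideanSpace ℝ (Fin n))) k (√(2 * t))
  rw [finrank_euclideanSpace_fin, abs_of_pos (by positivity), smul_eq_mul] at h2
  have h3 : ∫ y, k y = √(2 * t) ^ n * ∫ w, k (√(2 * t) • w) := by
    rw [h2, ← mul_assoc, mul_inv_cancel₀ (by positivity), one_mul]
  rw [h1, h3, ← mul_assoc, ← integral_const_mul]
  congr 1; ext w
  have h4 : (4 * π * t) ^ (-(n : ℝ) / 2) * √(2 * t) ^ n = (2 * π) ^ (-(n : ℝ) / 2) := by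
    rw [show 4 * π * t = (2 * π) * (2 * t) by ring,
      Real.mul_rpow (by positivity) (by positivity), Real.sqrt_eq_rpow, ← Real.rpow_natCast,
      ← Real.rpow_mul (by positivity), mul_assoc, ← Real.rpow_add (by positivity)]
    ring_nf
    simp
  have h5 : -‖√(2 * t) • w‖ ^ 2 / (4 * t) = -‖w‖ ^ 2 / 2 := by
    rw [norm_smul, mul_pow, Real.norm_eq_abs, sq_abs, Real.sq_sqrt (by positivity)]
    field_simp
    ring
  simp only [k, h4, h5, stdGaussianDensity, finrank_euclideanSpace_fin]
  ring


lemma fderiv_comp_add_smul {E F : Type*} [NormedAddCommGroup E] [NormedSpace ℝ E]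
    [NormedAddCommGroup F] [NormedSpace ℝ F] {q : E → F} (hq : Differentiable ℝ q)
    (z : E) (κ : ℝ) (v : E) :
    fderiv ℝ (fun v => q (z + κ • v)) v = κ • fderiv ℝ q (z + κ • v) := by
  have h1 : HasFDerivAt (fun v : E => z + κ • v) (κ • ContinuousLinearMap.id ℝ E) v :=
    ((hasFDerivAt_id v).const_smul κ).const_add z
  have h2 : HasFDerivAt (fun v => q (z + κ • v)) _ v := (hq _).hasFDerivAt.comp v h1
  rw [h2.fderiv]
  ext u; simp

lemma fderiv_fderiv_apply {E F : Type*} [NormedAddCommGroup E] [NormedSpace ℝ E]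
    [NormedAddCommGroup F] [NormedSpace ℝ F] {f : E → F} (hf' : Differentiable ℝ (fderiv ℝ f))
    (y e u : E) : fderiv ℝ (fun y => fderiv ℝ f y e) y u = fderiv ℝ (fderiv ℝ f) y u e := by
  rw [((hf' y).hasFDerivAt.clm_apply (hasFDerivAt_const e y)).fderiv]
  simp

/-- A bounded `C¹` function with bounded derivative. -/
structure IsBddC1 {E F : Type*} [NormedAddCommGroup E] [NormedSpace ℝ E] [NormedAddCommGroup F]
    [NormedSpace ℝ F] (q : E → F) : Prop where
  contDiff : ContDiff ℝ 1 q
  bound : ∃ C, ∀ y, ‖q y‖ ≤ C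
  bound_fderiv : ∃ C, ∀ y, ‖fderiv ℝ q y‖ ≤ C

namespace IsBddC1

variable {E F : Type*} [NormedAddCommGroup E] [NormedSpace ℝ E] [NormedAddCommGroup F]
    [NormedSpace ℝ F] {q : E → F}

lemma differentiable (hq : IsBddC1 q) : Differentiable ℝ q :=
  hq.contDiff.differentiable (by norm_num)

lemma continuous (hq : IsBddC1 q) : Continuous q := hq.contDiff.continuous

lemma continuous_fderiv (hq : IsBddC1 q) : Continuous (fderiv ℝ q) :=
  hq.contDiff.continuous_fderiv (by norm_num)

lemma fderiv_apply {f : E → F} (hf : IsBddC1 (fderiv ℝ f)) (e : E) :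
    IsBddC1 fun y => fderiv ℝ f y e := by
  have hd (y : E) : fderiv ℝ (fun y => fderiv ℝ f y e) y = (fderiv ℝ (fderiv ℝ f) y).flip e :=
    ContinuousLinearMap.ext fun u => fderiv_fderiv_apply hf.differentiable y e u
  refine ⟨hf.contDiff.clm_apply contDiff_const, ?_, ?_⟩
  · obtain ⟨C, hC⟩ := hf.bound
    exact ⟨C * ‖e‖, fun y => (ContinuousLinearMap.le_opNorm _ _).trans
      (mul_le_mul_of_nonneg_right (hC y) (norm_nonneg _))⟩
  · obtain ⟨C, hC⟩ := hf.bound_fderiv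
    refine ⟨C * ‖e‖, fun y => ?_⟩
    rw [hd]
    refine (ContinuousLinearMap.le_opNorm _ _).trans ?_
    rw [ContinuousLinearMap.opNorm_flip]
    exact mul_le_mul_of_nonneg_right (hC y) (norm_nonneg _)

lemma comp_add_smul (hq : IsBddC1 q) (z : E) (κ : ℝ) : IsBddC1 fun v => q (z + κ • v) := by
  refine ⟨hq.contDiff.comp (by fun_prop), ?_, ?_⟩
  · obtain ⟨C, hC⟩ := hq.bound
    exact ⟨C, fun v => hC _⟩
  · obtain ⟨C, hC⟩ := hq.bound_fderiv
    refine ⟨|κ| * C, fun v => ?_⟩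
    rw [fderiv_comp_add_smul hq.differentiable, norm_smul, Real.norm_eq_abs]
    exact mul_le_mul_of_nonneg_left (hC _) (abs_nonneg _)

lemma const_smul (hq : IsBddC1 q) (c : ℝ) : IsBddC1 fun y => c • q y := by
  refine ⟨hq.contDiff.const_smul c, ?_, ?_⟩
  · obtain ⟨C, hC⟩ := hq.bound
    refine ⟨|c| * C, fun y => ?_⟩
    rw [norm_smul, Real.norm_eq_abs]
    exact mul_le_mul_of_nonneg_left (hC y) (abs_nonneg c)
  · obtain ⟨C, hC⟩ := hq.bound_fderiv
    refine ⟨|c| * C, fun y => ?_⟩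
    rw [fderiv_fun_const_smul (hq.differentiable y), norm_smul, Real.norm_eq_abs]
    exact mul_le_mul_of_nonneg_left (hC y) (abs_nonneg c)

end IsBddC1

section GaussianAverage

variable {E : Type*} [NormedAddCommGroup E] [InnerProductSpace ℝ E] [FiniteDimensional ℝ E]
  [MeasurableSpace E] [BorelSpace E] {F : Type*} [NormedAddCommGroup F]

lemma integrable_of_bound {q : E → F} (hq : Continuous q) (hb : ∃ C, ∀ y, ‖q y‖ ≤ C)
    (κ : ℝ) (z : E) : Integrable (fun v => q (z + κ • v)) (stdGaussian E) := by
  obtain ⟨C, hC⟩ := hb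
  have : Continuous fun v => q (z + κ • v) := by fun_prop
  exact Integrable.of_bound this.aestronglyMeasurable C (Filter.Eventually.of_forall fun v => hC _)

variable [NormedSpace ℝ F]

/-- The Gaussian average of `q` at scale `κ` around `z`. -/
noncomputable def gaussAvg (q : E → F) (κ : ℝ) (z : E) : F :=
  ∫ v, q (z + κ • v) ∂(stdGaussian E)

lemma norm_gaussAvg_le {q : E → F} {C : ℝ} (hC : ∀ y, ‖q y‖ ≤ C) (κ : ℝ) (z : E) :
    ‖gaussAvg q κ z‖ ≤ C := by
  have := norm_integral_le_of_norm_le_const (μ := stdGaussian E) (f := fun v => q (z + κ • v))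
    (Filter.Eventually.of_forall fun v => hC _)
  simpa [gaussAvg] using this

lemma hasFDerivAt_gaussAvg {q : E → F} (hq : IsBddC1 q) (κ : ℝ) (z : E) :
    HasFDerivAt (gaussAvg q κ) (gaussAvg (fderiv ℝ q) κ z) z := by
  obtain ⟨C, hC⟩ := hq.bound_fderiv
  refine hasFDerivAt_integral_of_dominated_of_fderiv_le (s := Set.univ) (bound := fun _ => C)
    (F' := fun z v => fderiv ℝ q (z + κ • v)) Filter.univ_mem
    (Filter.Eventually.of_forall fun z => (integrable_of_bound hq.continuous hq.bound κ z).1)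
    (integrable_of_bound hq.continuous hq.bound κ z)
    (integrable_of_bound hq.continuous_fderiv hq.bound_fderiv κ z).1
    (Filter.Eventually.of_forall fun v z _ => hC _) (integrable_const _)
    (Filter.Eventually.of_forall fun v z _ => ?_)
  exact (hasFDerivAt_comp_add_right _).2 (hq.differentiable _).hasFDerivAt

lemma continuous_gaussAvg {q : E → F} (hq : Continuous q) (hb : ∃ C, ∀ y, ‖q y‖ ≤ C) (κ : ℝ) :
    Continuous (gaussAvg q κ) := by
  have hi := integrable_of_bound hq hb κ
  obtain ⟨C, hC⟩ := hb
  refine continuous_of_dominated (bound := fun _ => C) (fun z => (hi z).1)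
    (fun z => Filter.Eventually.of_forall fun v => hC _) (integrable_const _)
    (Filter.Eventually.of_forall fun v => by fun_prop)

lemma gaussAvg_fderiv_apply {q : E → F} [CompleteSpace F] (hq : Continuous (fderiv ℝ q))
    (hb : ∃ C, ∀ y, ‖fderiv ℝ q y‖ ≤ C) (κ : ℝ) (z e : E) :
    gaussAvg (fderiv ℝ q) κ z e = gaussAvg (fun y => fderiv ℝ q y e) κ z :=
  ContinuousLinearMap.integral_apply (integrable_of_bound hq hb κ z) e

lemma integrable_inner_mul {q : E → ℝ} (hq : Continuous q) (hb : ∃ C, ∀ y, ‖q y‖ ≤ C) (e : E) :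
    Integrable (fun v => ⟪v, e⟫ * q v) (stdGaussian E) := by
  obtain ⟨C, hC⟩ := hb
  refine integrable_stdGaussian_of_norm_le (‖e‖ * C)
    (Continuous.aestronglyMeasurable (by fun_prop)) fun v => ?_
  rw [norm_mul]
  have h1 : ‖⟪v, e⟫‖ ≤ ‖v‖ * ‖e‖ := norm_inner_le_norm v e
  have h2 : ‖v‖ ≤ 1 + ‖v‖ ^ 2 := by nlinarith [sq_nonneg (‖v‖ - 1), norm_nonneg v]
  calc ‖⟪v, e⟫‖ * ‖q v‖ ≤ (‖v‖ * ‖e‖) * C :=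
        mul_le_mul h1 (hC v) (norm_nonneg _) (by positivity)
    _ = (‖e‖ * C) * ‖v‖ := by ring
    _ ≤ _ := mul_le_mul_of_nonneg_left h2 (mul_nonneg (norm_nonneg _)
        ((norm_nonneg _).trans (hC v)))

lemma integrable_inner_sq_mul {q : E → ℝ} (hq : Continuous q) (hb : ∃ C, ∀ y, ‖q y‖ ≤ C) (e : E) :
    Integrable (fun v => ⟪v, e⟫ * (⟪v, e⟫ * q v)) (stdGaussian E) := by
  obtain ⟨C, hC⟩ := hb
  refine integrable_stdGaussian_of_norm_le (‖e‖ ^ 2 * C)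
    (Continuous.aestronglyMeasurable (by fun_prop)) fun v => ?_
  rw [norm_mul, norm_mul]
  have h1 : ‖⟪v, e⟫‖ ≤ ‖v‖ * ‖e‖ := norm_inner_le_norm v e
  have hC0 : 0 ≤ C := (norm_nonneg _).trans (hC v)
  calc ‖⟪v, e⟫‖ * (‖⟪v, e⟫‖ * ‖q v‖) ≤ (‖v‖ * ‖e‖) * ((‖v‖ * ‖e‖) * C) := by
        gcongr; exact hC v
    _ = (‖e‖ ^ 2 * C) * ‖v‖ ^ 2 := by ring
    _ ≤ _ := mul_le_mul_of_nonneg_left (by linarith) (by positivity)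

lemma IsBddC1.integral_inner_mul {q : E → ℝ} (hq : IsBddC1 q) (e : E) :
    ∫ v, ⟪v, e⟫ * q v ∂(stdGaussian E) = ∫ v, fderiv ℝ q v e ∂(stdGaussian E) := by
  have h0 := integrable_of_bound hq.continuous hq.bound 1 0
  have h2 := integrable_of_bound hq.continuous_fderiv hq.bound_fderiv 1 0
  simp only [one_smul, zero_add] at h0 h2
  exact integral_inner_mul_stdGaussian e hq.differentiable h0
    (integrable_inner_mul hq.continuous hq.bound e) (h2.apply_continuousLinearMap e)

lemma IsBddC1.integral_inner_mul_add_smul {q : E → ℝ} (hq : IsBddC1 q) (κ : ℝ) (z e : E) :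
    ∫ v, ⟪v, e⟫ * q (z + κ • v) ∂(stdGaussian E) =
      κ * gaussAvg (fun y => fderiv ℝ q y e) κ z := by
  rw [(hq.comp_add_smul z κ).integral_inner_mul e, gaussAvg, ← integral_const_mul]
  simp [fderiv_comp_add_smul hq.differentiable]

lemma IsBddC1.integral_inner_sq_mul_add_smul {q : E → ℝ} (hq : IsBddC1 q) (κ : ℝ) (z e : E)
    (he : ‖e‖ = 1) :
    ∫ v, ⟪v, e⟫ * (⟪v, e⟫ * q (z + κ • v)) ∂(stdGaussian E) =
      gaussAvg q κ z + κ * ∫ v, ⟪v, e⟫ * fderiv ℝ q (z + κ • v) e ∂(stdGaussian E) := by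
  have hr := hq.comp_add_smul z κ
  have hi0 := integrable_of_bound hq.continuous hq.bound κ z
  have hD : Continuous fun v => fderiv ℝ q (z + κ • v) e :=
    (hq.continuous_fderiv.comp (by fun_prop)).clm_apply continuous_const
  have hbD : ∃ C, ∀ v, ‖fderiv ℝ q (z + κ • v) e‖ ≤ C := by
    obtain ⟨C, hC⟩ := hq.bound_fderiv
    refine ⟨C, fun v => (ContinuousLinearMap.le_opNorm _ _).trans ?_⟩
    rw [he, mul_one]; exact hC _
  have hi1 := integrable_inner_mul hD hbD e
  have hfd (v : E) : fderiv ℝ (fun v => ⟪v, e⟫ * q (z + κ • v)) v e =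
      q (z + κ • v) + κ * (⟪v, e⟫ * fderiv ℝ q (z + κ • v) e) := by
    obtain ⟨L, hL⟩ : ∃ L : E →L[ℝ] ℝ, ∀ u, L u = ⟪u, e⟫ :=
      ⟨innerSL ℝ e, fun u => real_inner_comm _ _⟩
    have h1 : HasFDerivAt (fun v : E => ⟪v, e⟫) L v := by
      rw [← funext hL]; exact L.hasFDerivAt
    rw [(h1.fun_mul (hr.differentiable v).hasFDerivAt).fderiv,
      fderiv_comp_add_smul hq.differentiable]
    simp [hL, he]
    ring
  rw [integral_inner_mul_stdGaussian e]
  · simp_rw [hfd]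
    rw [integral_add hi0 (hi1.const_mul κ), integral_const_mul, gaussAvg]
  · exact (differentiable_id.inner ℝ (differentiable_const e)).mul hr.differentiable
  · exact integrable_inner_mul hr.continuous hr.bound e
  · exact integrable_inner_sq_mul hr.continuous hr.bound e
  · simp_rw [hfd]
    exact hi0.add (hi1.const_mul κ)

end GaussianAverage

section Entropy

variable {E : Type*} [NormedAddCommGroup E] [InnerProductSpace ℝ E] {f : E → ℝ} {a : ℝ}

lemma bound_sq_div (hf : IsBddC1 f) (ha : 0 < a) (hfa : ∀ y, a ≤ f y) (e : E) :
    ∃ C, ∀ y, ‖fderiv ℝ f y e ^ 2 / f y‖ ≤ C := by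
  obtain ⟨C, hC⟩ := hf.bound_fderiv
  refine ⟨(C * ‖e‖) ^ 2 / a, fun y => ?_⟩
  have h1 : ‖fderiv ℝ f y e‖ ≤ C * ‖e‖ := (ContinuousLinearMap.le_opNorm _ _).trans
    (mul_le_mul_of_nonneg_right (hC y) (norm_nonneg _))
  rw [norm_div, norm_pow, Real.norm_of_nonneg (ha.le.trans (hfa y))]
  gcongr
  exact hfa y

lemma continuous_sq_div (hf : IsBddC1 f) (ha : 0 < a) (hfa : ∀ y, a ≤ f y) (e : E) :
    Continuous fun y => fderiv ℝ f y e ^ 2 / f y :=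
  ((hf.continuous_fderiv.clm_apply continuous_const).pow 2).div hf.continuous
    fun y => (ha.trans_le (hfa y)).ne'

lemma bound_fderiv_fderiv (hf' : IsBddC1 (fderiv ℝ f)) (e : E) :
    ∃ C, ∀ y, ‖fderiv ℝ (fun y => fderiv ℝ f y e) y e‖ ≤ C := by
  obtain ⟨C, hC⟩ := (hf'.fderiv_apply e).bound_fderiv
  exact ⟨C * ‖e‖, fun y => (ContinuousLinearMap.le_opNorm _ _).trans
    (mul_le_mul_of_nonneg_right (hC y) (norm_nonneg _))⟩

variable {ι : Type*} [Fintype ι] (b : OrthonormalBasis ι ℝ E)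

/-- The Laplacian of `f` computed in an orthonormal basis. -/
noncomputable def basisLaplacian (f : E → ℝ) (y : E) : ℝ :=
  ∑ i, fderiv ℝ (fun y => fderiv ℝ f y (b i)) y (b i)

lemma continuous_basisLaplacian (hf' : IsBddC1 (fderiv ℝ f)) : Continuous (basisLaplacian b f) :=
  continuous_finsetSum _ fun i _ =>
    (hf'.fderiv_apply (b i)).continuous_fderiv.clm_apply continuous_const

lemma bound_basisLaplacian (hf' : IsBddC1 (fderiv ℝ f)) : ∃ C, ∀ y, ‖basisLaplacian b f y‖ ≤ C := by
  choose C hC using fun i => bound_fderiv_fderiv hf' (b i)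
  exact ⟨∑ i, C i, fun y => norm_sum_le_of_le _ fun i _ => hC i y⟩

variable [FiniteDimensional ℝ E] [MeasurableSpace E] [BorelSpace E]

lemma le_gaussAvg (hf : IsBddC1 f) (hfa : ∀ y, a ≤ f y) (κ : ℝ) (z : E) :
    a ≤ gaussAvg f κ z := by
  have := integral_mono (μ := stdGaussian E) (integrable_const a)
    (integrable_of_bound hf.continuous hf.bound κ z) (fun v => hfa _)
  simpa [gaussAvg] using this

/-- A Blachman–Stam type inequality for the Fisher information along Gaussian averages, in a single
direction. -/
lemma sq_gaussAvg_fderiv_div_le (hf : IsBddC1 f) (ha : 0 < a) (hfa : ∀ y, a ≤ f y) {e : E}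
    (he : ‖e‖ = 1) (hfe : IsBddC1 fun y => fderiv ℝ f y e) {α β κ : ℝ} (hαβ : α + β * κ = 1)
    (z : E) :
    gaussAvg (fun y => fderiv ℝ f y e) κ z ^ 2 / gaussAvg f κ z ≤
      α ^ 2 * gaussAvg (fun y => fderiv ℝ f y e ^ 2 / f y) κ z +
      (1 - α ^ 2) * gaussAvg (fun y => fderiv ℝ (fun y => fderiv ℝ f y e) y e) κ z +
      β ^ 2 * gaussAvg f κ z := by
  have hG : 0 < gaussAvg f κ z := ha.trans_le (le_gaussAvg hf hfa κ z)
  set D : E → ℝ := fun y => fderiv ℝ f y e with hD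
  have i1 := integrable_of_bound (continuous_sq_div hf ha hfa e) (bound_sq_div hf ha hfa e) κ z
  have i2 := integrable_inner_mul (hfe.comp_add_smul z κ).continuous
    (hfe.comp_add_smul z κ).bound e
  have i3 := integrable_inner_sq_mul (hf.comp_add_smul z κ).continuous
    (hf.comp_add_smul z κ).bound e
  have i4 := integrable_of_bound hfe.continuous hfe.bound κ z
  have i5 := integrable_inner_mul (hf.comp_add_smul z κ).continuous
    (hf.comp_add_smul z κ).bound e
  have i6 := integrable_of_bound hf.continuous hf.bound κ z
  have e2 := hfe.integral_inner_mul_add_smul κ z e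
  have e3 := hf.integral_inner_sq_mul_add_smul κ z e he
  have e5 := hf.integral_inner_mul_add_smul κ z e
  rw [e2] at e3
  change _ = κ * gaussAvg D κ z at e5
  set G := gaussAvg f κ z
  set V := gaussAvg D κ z
  set W := gaussAvg (fun y => fderiv ℝ D y e) κ z
  set l := V / G with hl
  have hlG : l * G = V := div_mul_cancel₀ _ hG.ne'
  have hnn : 0 ≤ ∫ v, (α ^ 2 * (fderiv ℝ f (z + κ • v) e ^ 2 / f (z + κ • v)) +
      2 * α * β * (⟪v, e⟫ * D (z + κ • v)) + β ^ 2 * (⟪v, e⟫ * (⟪v, e⟫ * f (z + κ • v))) +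
      (-(2 * l * α)) * D (z + κ • v) + (-(2 * l * β)) * (⟪v, e⟫ * f (z + κ • v)) +
      l ^ 2 * f (z + κ • v)) ∂(stdGaussian E) := by
    refine integral_nonneg fun v => ?_
    have hp : 0 < f (z + κ • v) := ha.trans_le (hfa _)
    have : (0 : ℝ) ≤ (α * D (z + κ • v) + β * ⟪v, e⟫ * f (z + κ • v) - l * f (z + κ • v)) ^ 2 /
      f (z + κ • v) := by positivity
    refine this.trans_eq ?_
    simp only [hD]
    field_simp
    ring
  have j2 := (i1.const_mul (α ^ 2)).fun_add (i2.const_mul (2 * α * β))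
  have j3 := j2.fun_add (i3.const_mul (β ^ 2))
  have j4 := j3.fun_add (i4.const_mul (-(2 * l * α)))
  have j5 := j4.fun_add (i5.const_mul (-(2 * l * β)))
  rw [integral_add j5 (i6.const_mul _), integral_add j4 (i5.const_mul _),
    integral_add j3 (i4.const_mul _), integral_add j2 (i3.const_mul _),
    integral_add (i1.const_mul _) (i2.const_mul _), integral_const_mul, integral_const_mul,
    integral_const_mul, integral_const_mul, integral_const_mul, integral_const_mul,
    e2, e3, e5] at hnn
  change 0 ≤ α ^ 2 * gaussAvg (fun y => fderiv ℝ f y e ^ 2 / f y) κ z + _ + _ +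
    _ * V + _ + _ * G at hnn
  have hV : V ^ 2 / G = l * V := by rw [hl]; ring
  rw [hV]
  have h1 : κ * β = 1 - α := by linarith
  calc l * V = 2 * l * (α + β * κ) * V - l * (l * G) := by rw [hαβ, hlG]; ring
    _ ≤ α ^ 2 * gaussAvg (fun y => fderiv ℝ f y e ^ 2 / f y) κ z +
        (2 * α * (κ * β) + (κ * β) ^ 2) * W + β ^ 2 * G := by linarith
    _ = _ := by rw [h1]; ring

lemma gaussAvg_basisLaplacian (hf' : IsBddC1 (fderiv ℝ f)) (κ : ℝ) (z : E) :
    gaussAvg (basisLaplacian b f) κ z =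
      ∑ i, gaussAvg (fun y => fderiv ℝ (fun y => fderiv ℝ f y (b i)) y (b i)) κ z :=
  integral_finsetSum _ fun i _ => integrable_of_bound
    ((hf'.fderiv_apply (b i)).continuous_fderiv.clm_apply continuous_const)
    (bound_fderiv_fderiv hf' (b i)) κ z

lemma hasDerivAt_gaussAvg_rotation (hf : IsBddC1 f) (hf' : IsBddC1 (fderiv ℝ f)) (w : E) (θ : ℝ) :
    HasDerivAt (fun θ => gaussAvg f (Real.cos θ) (Real.sin θ • w))
      (Real.cos θ * gaussAvg (fderiv ℝ f) (Real.cos θ) (Real.sin θ • w) w -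
        Real.sin θ * Real.cos θ *
          gaussAvg (basisLaplacian b f) (Real.cos θ) (Real.sin θ • w)) θ := by
  obtain ⟨C, hC⟩ := hf.bound_fderiv
  have hnorm : Integrable (fun v : E => ‖v‖) (stdGaussian E) :=
    (IsGaussian.integrable_id (μ := stdGaussian E)).norm
  have key := (hasDerivAt_integral_of_dominated_loc_of_deriv_le (s := Set.univ) (x₀ := θ)
    (μ := stdGaussian E) (bound := fun v => C * (‖w‖ + ‖v‖))
    (F := fun θ v => f (Real.sin θ • w + Real.cos θ • v))
    (F' := fun θ v => fderiv ℝ f (Real.sin θ • w + Real.cos θ • v)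
      (Real.cos θ • w + (-Real.sin θ) • v)) Filter.univ_mem
    (Filter.Eventually.of_forall fun θ => (integrable_of_bound hf.continuous hf.bound _ _).1)
    (integrable_of_bound hf.continuous hf.bound _ _)
    (Continuous.aestronglyMeasurable
      ((hf.continuous_fderiv.comp (by fun_prop)).clm_apply (by fun_prop)))
    (Filter.Eventually.of_forall fun v θ _ => ?_)
    (((integrable_const _).add hnorm).const_mul C)
    (Filter.Eventually.of_forall fun v θ _ => ?_)).2
  · convert! key using 1
    have hvi (i : ι) := integrable_inner_mul
      ((hf'.fderiv_apply (b i)).comp_add_smul (Real.sin θ • w) (Real.cos θ)).continuous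
      ((hf'.fderiv_apply (b i)).comp_add_smul (Real.sin θ • w) (Real.cos θ)).bound (b i)
    have hexp (v : E) : fderiv ℝ f (Real.sin θ • w + Real.cos θ • v)
        (Real.cos θ • w + (-Real.sin θ) • v) =
        Real.cos θ * fderiv ℝ f (Real.sin θ • w + Real.cos θ • v) w +
        (-Real.sin θ) * ∑ i, ⟪v, b i⟫ * fderiv ℝ f (Real.sin θ • w + Real.cos θ • v) (b i) := by
      conv_lhs => rw [map_add, map_smul, map_smul]
      simp only [smul_eq_mul]
      congr 2
      generalize fderiv ℝ f (Real.sin θ • w + Real.cos θ • v) = L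
      conv_lhs => rw [← b.sum_repr' v]
      simp [real_inner_comm]
    simp_rw [hexp]
    have hw := (integrable_of_bound hf'.continuous hf'.bound (Real.cos θ)
      (Real.sin θ • w)).apply_continuousLinearMap w
    rw [integral_add (hw.const_mul _) ((integrable_finsetSum _ fun i _ => hvi i).const_mul _),
      integral_const_mul, integral_const_mul, integral_finsetSum _ fun i _ => hvi i,
      gaussAvg_fderiv_apply hf'.continuous hf'.bound, gaussAvg_basisLaplacian b hf']
    simp_rw [fun i => (hf'.fderiv_apply (b i)).integral_inner_mul_add_smul (Real.cos θ)
      (Real.sin θ • w) (b i), ← Finset.mul_sum]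
    simp only [gaussAvg]
    ring
  · refine (ContinuousLinearMap.le_opNorm _ _).trans
      (mul_le_mul (hC _) ?_ (norm_nonneg _) ((norm_nonneg _).trans (hC 0)))
    refine (norm_add_le _ _).trans (add_le_add ?_ ?_)
    · rw [norm_smul]
      exact mul_le_of_le_one_left (norm_nonneg _) (Real.abs_cos_le_one θ)
    · rw [norm_smul, norm_neg]
      exact mul_le_of_le_one_left (norm_nonneg _) (Real.abs_sin_le_one θ)
  · exact (hf.differentiable _).hasFDerivAt.comp_hasDerivAt θ
      (((Real.hasDerivAt_sin θ).smul_const w).add ((Real.hasDerivAt_cos θ).smul_const v))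

lemma hasFDerivAt_gaussAvg_smul {q : E → ℝ} (hq : IsBddC1 q) (κ s : ℝ) (w : E) :
    HasFDerivAt (fun w => gaussAvg q κ (s • w)) (s • gaussAvg (fderiv ℝ q) κ (s • w)) w := by
  have h := (hasFDerivAt_gaussAvg hq κ (s • w)).comp w
    ((hasFDerivAt_id w).const_smul s)
  convert! h using 1
  ext u; simp


lemma norm_log_add_one_le {x B : ℝ} (ha : 0 < a) (hx : a ≤ x) (hB : x ≤ B) :
    ‖Real.log x + 1‖ ≤ |Real.log a| + |Real.log B| + 1 := by
  have h1 := Real.log_le_log ha hx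
  have h2 := Real.log_le_log (ha.trans_le hx) hB
  rw [Real.norm_eq_abs, abs_le]
  constructor <;> linarith [neg_abs_le (Real.log a), abs_nonneg (Real.log a),
    abs_nonneg (Real.log B), le_abs_self (Real.log B)]

lemma exists_norm_log_gaussAvg_add_one_le (hf : IsBddC1 f) (ha : 0 < a) (hfa : ∀ y, a ≤ f y) :
    ∃ M, ∀ κ z, ‖Real.log (gaussAvg f κ z) + 1‖ ≤ M := by
  obtain ⟨B, hB⟩ := hf.bound
  exact ⟨_, fun κ z => norm_log_add_one_le ha (le_gaussAvg hf hfa κ z)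
    ((le_abs_self _).trans (norm_gaussAvg_le hB κ z))⟩

lemma continuous_log_gaussAvg_smul (hf : IsBddC1 f) (ha : 0 < a) (hfa : ∀ y, a ≤ f y) (κ s : ℝ) :
    Continuous fun w => Real.log (gaussAvg f κ (s • w)) + 1 :=
  (((continuous_gaussAvg hf.continuous hf.bound κ).comp (continuous_const_smul s)).log
    fun w => (ha.trans_le (le_gaussAvg hf hfa κ (s • w))).ne').add continuous_const

lemma integrable_of_continuous_of_bound {q : E → ℝ} (hq : Continuous q)
    (hb : ∃ C, ∀ y, ‖q y‖ ≤ C) : Integrable q (stdGaussian E) := by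
  simpa using integrable_of_bound hq hb 1 0

lemma exists_norm_gaussAvg_sq_div_le (hf : IsBddC1 f) (ha : 0 < a) (hfa : ∀ y, a ≤ f y) {q : E → ℝ}
    (hq : ∃ C, ∀ y, ‖q y‖ ≤ C) : ∃ C, ∀ κ z, ‖gaussAvg q κ z ^ 2 / gaussAvg f κ z‖ ≤ C := by
  obtain ⟨C, hC⟩ := hq
  refine ⟨C ^ 2 / a, fun κ z => ?_⟩
  have h := le_gaussAvg hf hfa κ z
  rw [norm_div, norm_pow, Real.norm_of_nonneg (ha.le.trans h)]
  gcongr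
  exact norm_gaussAvg_le hC κ z

lemma integrable_gaussAvg_sq_div (hf : IsBddC1 f) (ha : 0 < a) (hfa : ∀ y, a ≤ f y) {q : E → ℝ}
    (hqc : Continuous q) (hq : ∃ C, ∀ y, ‖q y‖ ≤ C) (κ s : ℝ) :
    Integrable (fun w => gaussAvg q κ (s • w) ^ 2 / gaussAvg f κ (s • w)) (stdGaussian E) := by
  obtain ⟨C, hC⟩ := exists_norm_gaussAvg_sq_div_le hf ha hfa hq
  have hc := continuous_const_smul (T := E) s
  exact integrable_of_continuous_of_bound
    ((((continuous_gaussAvg hqc hq κ).comp hc).pow 2).div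
      ((continuous_gaussAvg hf.continuous hf.bound κ).comp hc)
      fun w => (ha.trans_le (le_gaussAvg hf hfa κ (s • w))).ne') ⟨C, fun w => hC _ _⟩

lemma exists_norm_log_mul_gaussAvg_le (hf : IsBddC1 f) (ha : 0 < a) (hfa : ∀ y, a ≤ f y) {q : E → ℝ}
    (hq : ∃ C, ∀ y, ‖q y‖ ≤ C) :
    ∃ C, ∀ κ z, ‖(Real.log (gaussAvg f κ z) + 1) * gaussAvg q κ z‖ ≤ C := by
  obtain ⟨M, hM⟩ := exists_norm_log_gaussAvg_add_one_le hf ha hfa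
  obtain ⟨C, hC⟩ := hq
  refine ⟨M * C, fun κ z => ?_⟩
  rw [norm_mul]
  exact mul_le_mul (hM κ z) (norm_gaussAvg_le hC κ z) (norm_nonneg _)
    ((norm_nonneg _).trans (hM κ z))

lemma continuous_log_mul_gaussAvg (hf : IsBddC1 f) (ha : 0 < a) (hfa : ∀ y, a ≤ f y) {q : E → ℝ}
    (hqc : Continuous q) (hq : ∃ C, ∀ y, ‖q y‖ ≤ C) (κ s : ℝ) :
    Continuous fun w => (Real.log (gaussAvg f κ (s • w)) + 1) * gaussAvg q κ (s • w) :=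
  (continuous_log_gaussAvg_smul hf ha hfa κ s).mul
    ((continuous_gaussAvg hqc hq κ).comp (continuous_const_smul s))

lemma integrable_log_mul_gaussAvg (hf : IsBddC1 f) (ha : 0 < a) (hfa : ∀ y, a ≤ f y) {q : E → ℝ}
    (hqc : Continuous q) (hq : ∃ C, ∀ y, ‖q y‖ ≤ C) (κ s : ℝ) :
    Integrable (fun w => (Real.log (gaussAvg f κ (s • w)) + 1) * gaussAvg q κ (s • w))
      (stdGaussian E) := by
  obtain ⟨C, hC⟩ := exists_norm_log_mul_gaussAvg_le hf ha hfa hq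
  exact integrable_of_continuous_of_bound (continuous_log_mul_gaussAvg hf ha hfa hqc hq κ s)
    ⟨C, fun w => hC _ _⟩

lemma integral_inner_mul_log_mul_gaussAvg (hf : IsBddC1 f) (ha : 0 < a) (hfa : ∀ y, a ≤ f y)
    (hf' : IsBddC1 (fderiv ℝ f)) (κ s : ℝ) (e : E) :
    ∫ w, ⟪w, e⟫ * ((Real.log (gaussAvg f κ (s • w)) + 1) *
        gaussAvg (fun y => fderiv ℝ f y e) κ (s • w)) ∂(stdGaussian E) =
      s * (∫ w, gaussAvg (fun y => fderiv ℝ f y e) κ (s • w) ^ 2 / gaussAvg f κ (s • w)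
          ∂(stdGaussian E) +
        ∫ w, (Real.log (gaussAvg f κ (s • w)) + 1) *
          gaussAvg (fun y => fderiv ℝ (fun y => fderiv ℝ f y e) y e) κ (s • w)
          ∂(stdGaussian E)) := by
  have hfe := hf'.fderiv_apply e
  have hd (w : E) := (((hasFDerivAt_gaussAvg_smul hf κ s w).log
    (ha.trans_le (le_gaussAvg hf hfa κ (s • w))).ne').add_const 1).fun_mul
      (hasFDerivAt_gaussAvg_smul hfe κ s w)
  have hfd (w : E) : fderiv ℝ (fun w => (Real.log (gaussAvg f κ (s • w)) + 1) *
        gaussAvg (fun y => fderiv ℝ f y e) κ (s • w)) w e =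
      s * (gaussAvg (fun y => fderiv ℝ f y e) κ (s • w) ^ 2 / gaussAvg f κ (s • w) +
        (Real.log (gaussAvg f κ (s • w)) + 1) *
          gaussAvg (fun y => fderiv ℝ (fun y => fderiv ℝ f y e) y e) κ (s • w)) := by
    rw [(hd w).fderiv]
    simp only [add_apply, smul_apply, smul_eq_mul,
      gaussAvg_fderiv_apply hf'.continuous hf'.bound,
      gaussAvg_fderiv_apply hfe.continuous_fderiv hfe.bound_fderiv]
    ring
  have hi1 := integrable_gaussAvg_sq_div hf ha hfa hfe.continuous hfe.bound κ s
  have hi2 := integrable_log_mul_gaussAvg hf ha hfa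
    (hfe.continuous_fderiv.clm_apply continuous_const) (bound_fderiv_fderiv hf' e) κ s
  obtain ⟨C, hC⟩ := exists_norm_log_mul_gaussAvg_le hf ha hfa hfe.bound
  rw [integral_inner_mul_stdGaussian e (fun w => (hd w).differentiableAt)
    (integrable_log_mul_gaussAvg hf ha hfa hfe.continuous hfe.bound κ s)
    (integrable_inner_mul (continuous_log_mul_gaussAvg hf ha hfa hfe.continuous hfe.bound κ s)
      ⟨C, fun w => hC _ _⟩ e)]
  · simp_rw [hfd]
    rw [integral_const_mul, integral_add hi1 hi2]
  · simp_rw [hfd]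
    exact (hi1.add hi2).const_mul s

/-- The derivative of the entropy of the partial Gaussian averages of `f` is the Fisher information
of these averages. -/
lemma hasDerivAt_integral_gaussAvg_mul_log (hf : IsBddC1 f) (ha : 0 < a) (hfa : ∀ y, a ≤ f y)
    (hf' : IsBddC1 (fderiv ℝ f)) (θ : ℝ) :
    HasDerivAt (fun θ => ∫ w, gaussAvg f (Real.cos θ) (Real.sin θ • w) *
        Real.log (gaussAvg f (Real.cos θ) (Real.sin θ • w)) ∂(stdGaussian E))
      (Real.sin θ * Real.cos θ * ∑ i, ∫ w, gaussAvg (fun y => fderiv ℝ f y (b i)) (Real.cos θ)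
        (Real.sin θ • w) ^ 2 / gaussAvg f (Real.cos θ) (Real.sin θ • w) ∂(stdGaussian E)) θ := by
  obtain ⟨M, hM⟩ := exists_norm_log_gaussAvg_add_one_le hf ha hfa
  obtain ⟨C, hC⟩ := hf'.bound
  obtain ⟨K, hK⟩ := bound_basisLaplacian b hf'
  obtain ⟨B, hB⟩ := hf.bound
  have hM0 : 0 ≤ M := (norm_nonneg _).trans (hM 0 0)
  have hnorm : Integrable (fun v : E => ‖v‖) (stdGaussian E) :=
    (IsGaussian.integrable_id (μ := stdGaussian E)).norm
  have hpos (κ : ℝ) (z : E) := ha.trans_le (le_gaussAvg hf hfa κ z)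
  have hGc (κ s : ℝ) : Continuous fun w : E => gaussAvg f κ (s • w) :=
    (continuous_gaussAvg hf.continuous hf.bound κ).comp (continuous_const_smul s)
  have hlc (κ s : ℝ) : Continuous fun w : E => Real.log (gaussAvg f κ (s • w)) :=
    (hGc κ s).log fun w => (hpos κ (s • w)).ne'
  have key := (hasDerivAt_integral_of_dominated_loc_of_deriv_le (s := Set.univ) (x₀ := θ)
    (μ := stdGaussian E) (bound := fun w => M * (C * ‖w‖ + K))
    (F := fun θ w => gaussAvg f (Real.cos θ) (Real.sin θ • w) *
        Real.log (gaussAvg f (Real.cos θ) (Real.sin θ • w)))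
    (F' := fun θ w => (Real.log (gaussAvg f (Real.cos θ) (Real.sin θ • w)) + 1) *
      (Real.cos θ * gaussAvg (fderiv ℝ f) (Real.cos θ) (Real.sin θ • w) w -
        Real.sin θ * Real.cos θ * gaussAvg (basisLaplacian b f) (Real.cos θ) (Real.sin θ • w)))
    Filter.univ_mem
    (Filter.Eventually.of_forall fun θ => ((hGc _ _).mul (hlc _ _)).aestronglyMeasurable)
    (integrable_of_continuous_of_bound ((hGc _ _).mul (hlc _ _)) ⟨B * (M + 1), fun w => ?_⟩)
    (Continuous.aestronglyMeasurable ?_)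
    (Filter.Eventually.of_forall fun w θ _ => ?_)
    (((hnorm.const_mul C).add (integrable_const K)).const_mul M)
    (Filter.Eventually.of_forall fun w θ _ => ?_)).2
  · convert! key using 1
    have hexp (w : E) : (Real.log (gaussAvg f (Real.cos θ) (Real.sin θ • w)) + 1) *
      (Real.cos θ * gaussAvg (fderiv ℝ f) (Real.cos θ) (Real.sin θ • w) w -
        Real.sin θ * Real.cos θ * gaussAvg (basisLaplacian b f) (Real.cos θ) (Real.sin θ • w)) =
      ∑ i, (Real.cos θ * (⟪w, b i⟫ * ((Real.log (gaussAvg f (Real.cos θ) (Real.sin θ • w)) + 1) *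
          gaussAvg (fun y => fderiv ℝ f y (b i)) (Real.cos θ) (Real.sin θ • w))) -
        Real.sin θ * Real.cos θ * ((Real.log (gaussAvg f (Real.cos θ) (Real.sin θ • w)) + 1) *
          gaussAvg (fun y => fderiv ℝ (fun y => fderiv ℝ f y (b i)) y (b i)) (Real.cos θ)
            (Real.sin θ • w))) := by
      have hw : gaussAvg (fderiv ℝ f) (Real.cos θ) (Real.sin θ • w) w =
          ∑ i, ⟪w, b i⟫ * gaussAvg (fun y => fderiv ℝ f y (b i)) (Real.cos θ)
            (Real.sin θ • w) := by
        simp_rw [← gaussAvg_fderiv_apply hf'.continuous hf'.bound]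
        generalize gaussAvg (fderiv ℝ f) (Real.cos θ) (Real.sin θ • w) = L
        conv_lhs => rw [← b.sum_repr' w]
        simp [real_inner_comm]
      rw [hw, gaussAvg_basisLaplacian b hf', Finset.mul_sum, Finset.mul_sum,
        ← Finset.sum_sub_distrib, Finset.mul_sum]
      exact Finset.sum_congr rfl fun i _ => by ring
    have hi1 (i : ι) := integrable_inner_mul (continuous_log_mul_gaussAvg hf ha hfa
      (hf'.fderiv_apply (b i)).continuous (hf'.fderiv_apply (b i)).bound (Real.cos θ) (Real.sin θ))
      ((exists_norm_log_mul_gaussAvg_le hf ha hfa (hf'.fderiv_apply (b i)).bound).imp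
        fun _ h w => h _ _) (b i)
    have hi2 (i : ι) := integrable_log_mul_gaussAvg hf ha hfa
      ((hf'.fderiv_apply (b i)).continuous_fderiv.clm_apply continuous_const)
      (bound_fderiv_fderiv hf' (b i)) (Real.cos θ) (Real.sin θ)
    simp_rw [hexp]
    rw [Finset.mul_sum]
    refine Eq.trans ?_ (integral_finsetSum _ fun i _ =>
      ((hi1 i).const_mul _).sub ((hi2 i).const_mul _)).symm
    refine Finset.sum_congr rfl fun i _ => ?_
    rw [integral_sub' ((hi1 i).const_mul _) ((hi2 i).const_mul _), integral_const_mul,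
      integral_const_mul, integral_inner_mul_log_mul_gaussAvg hf ha hfa hf']
    ring
  · rw [norm_mul]
    refine mul_le_mul (norm_gaussAvg_le hB _ _) ?_ (norm_nonneg _) ((norm_nonneg _).trans (hB 0))
    calc ‖Real.log (gaussAvg f (Real.cos θ) (Real.sin θ • w))‖
        = ‖(Real.log (gaussAvg f (Real.cos θ) (Real.sin θ • w)) + 1) - 1‖ := by simp
      _ ≤ M + 1 := (norm_sub_le _ _).trans (add_le_add (hM _ _) (by simp))
  · have h1 : Continuous fun w : E => gaussAvg (fderiv ℝ f) (Real.cos θ) (Real.sin θ • w) :=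
      (continuous_gaussAvg hf'.continuous hf'.bound _).comp (continuous_const_smul _)
    have h2 : Continuous fun w : E =>
        gaussAvg (basisLaplacian b f) (Real.cos θ) (Real.sin θ • w) :=
      (continuous_gaussAvg (continuous_basisLaplacian b hf') ⟨K, hK⟩ _).comp
        (continuous_const_smul _)
    exact ((hlc _ _).add continuous_const).mul
      ((continuous_const.mul (h1.clm_apply continuous_id)).sub (continuous_const.mul h2))
  · rw [norm_mul]
    refine mul_le_mul (hM _ _) ((norm_sub_le _ _).trans (add_le_add ?_ ?_)) (norm_nonneg _) hM0
    · rw [norm_mul]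
      refine (mul_le_of_le_one_left (norm_nonneg _) (Real.abs_cos_le_one θ)).trans
        ((ContinuousLinearMap.le_opNorm _ _).trans ?_)
      exact mul_le_mul_of_nonneg_right (norm_gaussAvg_le hC _ _) (norm_nonneg _)
    · rw [norm_mul]
      refine (mul_le_of_le_one_left (norm_nonneg _) ?_).trans (norm_gaussAvg_le hK _ _)
      rw [norm_mul]
      exact mul_le_one₀ (Real.abs_sin_le_one θ) (norm_nonneg _) (Real.abs_cos_le_one θ)
  · have h := hasDerivAt_gaussAvg_rotation b hf hf' w θ
    have h2 := h.fun_mul (h.log (hpos _ _).ne')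
    convert! h2 using 1
    have := (hpos (Real.cos θ) (Real.sin θ • w)).ne'
    field_simp

lemma sum_integral_gaussAvg_sq_div_le (hf : IsBddC1 f) (ha : 0 < a) (hfa : ∀ y, a ≤ f y)
    (hf' : IsBddC1 (fderiv ℝ f)) {α β θ : ℝ} (hαβ : α + β * Real.cos θ = 1) :
    ∑ i, ∫ w, gaussAvg (fun y => fderiv ℝ f y (b i)) (Real.cos θ) (Real.sin θ • w) ^ 2 /
        gaussAvg f (Real.cos θ) (Real.sin θ • w) ∂(stdGaussian E) ≤
      α ^ 2 * ∑ i, ∫ w, fderiv ℝ f w (b i) ^ 2 / f w ∂(stdGaussian E) +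
      (1 - α ^ 2) * ∑ i, ∫ w, fderiv ℝ (fun y => fderiv ℝ f y (b i)) w (b i) ∂(stdGaussian E) +
      β ^ 2 * (Fintype.card ι * ∫ w, f w ∂(stdGaussian E)) := by
  have hconst : β ^ 2 * (Fintype.card ι * ∫ w, f w ∂(stdGaussian E)) =
      ∑ _i : ι, β ^ 2 * ∫ w, f w ∂(stdGaussian E) := by
    rw [Finset.sum_const, Finset.card_univ, nsmul_eq_mul]; ring
  rw [hconst, Finset.mul_sum, Finset.mul_sum, ← Finset.sum_add_distrib, ← Finset.sum_add_distrib]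
  refine Finset.sum_le_sum fun i _ => ?_
  have hfe := hf'.fderiv_apply (b i)
  have rot {q : E → ℝ} (hq : Continuous q) (hb : ∃ C, ∀ y, ‖q y‖ ≤ C) :=
    integrable_and_integral_rotation_stdGaussian hq (integrable_of_continuous_of_bound hq hb) θ
  obtain ⟨i1, e1⟩ := rot (continuous_sq_div hf ha hfa (b i)) (bound_sq_div hf ha hfa (b i))
  obtain ⟨i2, e2⟩ := rot (hfe.continuous_fderiv.clm_apply continuous_const)
    (bound_fderiv_fderiv hf' (b i))
  obtain ⟨i3, e3⟩ := rot hf.continuous hf.bound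
  rw [← e1, ← e2, ← e3, ← integral_const_mul, ← integral_const_mul, ← integral_const_mul,
    ← integral_add (i1.const_mul _) (i2.const_mul _),
    ← integral_add ((i1.const_mul _).fun_add (i2.const_mul _)) (i3.const_mul _)]
  exact integral_mono (integrable_gaussAvg_sq_div hf ha hfa hfe.continuous hfe.bound _ _)
    (((i1.const_mul _).fun_add (i2.const_mul _)).fun_add (i3.const_mul _))
    fun w => sq_gaussAvg_fderiv_div_le hf ha hfa (b.norm_eq_one i) hfe hαβ _

/-- The dimensional logarithmic Sobolev inequality for the standard Gaussian measure. -/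
theorem dimensional_logSobolev_stdGaussian [Nonempty ι] (hf : IsBddC1 f) (ha : 0 < a)
    (hfa : ∀ y, a ≤ f y) (hf' : IsBddC1 (fderiv ℝ f)) {F A D : ℝ}
    (hF : ∫ w, f w ∂(stdGaussian E) = F)
    (hA : ∑ i, ∫ w, fderiv ℝ f w (b i) ^ 2 / f w ∂(stdGaussian E) = A)
    (hD : ∑ i, ∫ w, fderiv ℝ (fun y => fderiv ℝ f y (b i)) w (b i) ∂(stdGaussian E) = D) :
    0 < 1 - (D - A) / (Fintype.card ι * F) ∧
    ∫ w, f w * Real.log (f w) ∂(stdGaussian E) - F * Real.log F ≤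
      D / 2 + Fintype.card ι / 2 * F * Real.log (1 - (D - A) / (Fintype.card ι * F)) := by
  have hF0 : 0 < F := by
    have := le_gaussAvg hf hfa 1 0
    simp only [gaussAvg, one_smul, zero_add, hF] at this
    exact ha.trans_le this
  have hm : 0 < Fintype.card ι * F := mul_pos (Nat.cast_pos.2 Fintype.card_pos) hF0
  have fisher {α β θ : ℝ} (h : α + β * Real.cos θ = 1) :=
    sum_integral_gaussAvg_sq_div_le b hf ha hfa hf' h
  simp only [hF, hA, hD] at fisher
  set m := Fintype.card ι * F with hmdef
  set ℓ := (D - A) / m with hℓ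
  have hℓm : ℓ * m = D - A := div_mul_cancel₀ _ hm.ne'
  have nonneg (θ : ℝ) : 0 ≤ ∑ i, ∫ w, gaussAvg (fun y => fderiv ℝ f y (b i)) (Real.cos θ)
      (Real.sin θ • w) ^ 2 / gaussAvg f (Real.cos θ) (Real.sin θ • w) ∂(stdGaussian E) :=
    Finset.sum_nonneg fun i _ => integral_nonneg fun w =>
      div_nonneg (sq_nonneg _) (ha.le.trans (le_gaussAvg hf hfa _ _))
  have hpos : 0 < 1 - ℓ := by
    by_contra! hcon
    have h1 (α : ℝ) : 0 ≤ α ^ 2 * A + (1 - α ^ 2) * D + (1 - α) ^ 2 * m :=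
      (nonneg 0).trans (fisher (by simp))
    have hle : m ≤ D - A := by nlinarith
    have h2 (α : ℝ) : 2 * α * m ≤ D + m := by nlinarith [h1 α, sq_nonneg α]
    have h3 := h2 ((D + m + 1) / (2 * m))
    have h4 : 2 * ((D + m + 1) / (2 * m)) * m = D + m + 1 := by field_simp
    linarith
  have hposθ (θ : ℝ) : 0 < 1 - Real.cos θ ^ 2 * ℓ := by
    have h := Real.sin_sq_add_cos_sq θ
    have h' : 1 - Real.cos θ ^ 2 * ℓ = Real.sin θ ^ 2 + Real.cos θ ^ 2 * (1 - ℓ) := by linarith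
    rw [h']
    rcases eq_or_ne (Real.cos θ) 0 with hc | hc
    · rw [hc] at h ⊢; linarith
    · positivity
  refine ⟨hpos, ?_⟩
  have hderiv (θ : ℝ) := ((hasDerivAt_integral_gaussAvg_mul_log b hf ha hfa hf' θ).fun_sub
    ((((Real.hasDerivAt_sin θ).fun_pow 2).mul_const (D / 2)))).fun_add
    ((((((Real.hasDerivAt_cos θ).fun_pow 2).mul_const ℓ).const_sub 1).log
      (hposθ θ).ne').const_mul (m / 2))
  have hanti := antitoneOn_of_deriv_nonpos (convex_Icc 0 (π / 2))
    (fun θ _ => (hderiv θ).continuousAt.continuousWithinAt)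
    (fun θ _ => (hderiv θ).differentiableAt.differentiableWithinAt) (fun θ hθ => ?_)
  · have h := hanti (Set.left_mem_Icc.2 (by positivity)) (Set.right_mem_Icc.2 (by positivity))
      (by positivity : (0 : ℝ) ≤ π / 2)
    simp [gaussAvg, hF] at h
    have hm2 : Fintype.card ι / 2 * F = m / 2 := by rw [hmdef]; ring
    rw [hm2]
    linarith
  · rw [interior_Icc] at hθ
    rw [(hderiv θ).deriv]
    have hs : 0 < Real.sin θ := Real.sin_pos_of_pos_of_lt_pi hθ.1 (by linarith [hθ.2, Real.pi_pos])
    have hc : 0 < Real.cos θ := Real.cos_pos_of_mem_Ioo ⟨by linarith [hθ.1, Real.pi_pos], hθ.2⟩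
    have hq := hposθ θ
    have hfi := fisher (α := (1 - Real.cos θ ^ 2 * ℓ)⁻¹)
      (β := -(Real.cos θ * ℓ) * (1 - Real.cos θ ^ 2 * ℓ)⁻¹) (θ := θ) (by field_simp; ring)
    set S := ∑ i, ∫ w, gaussAvg (fun y => fderiv ℝ f y (b i)) (Real.cos θ)
      (Real.sin θ • w) ^ 2 / gaussAvg f (Real.cos θ) (Real.sin θ • w) ∂(stdGaussian E)
    have hS : S ≤ D - m * ℓ / (1 - Real.cos θ ^ 2 * ℓ) := by
      refine hfi.trans_eq ?_
      have : A = D - ℓ * m := by linarith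
      rw [this]
      field_simp
      ring
    calc _ = Real.sin θ * Real.cos θ * (S - (D - m * ℓ / (1 - Real.cos θ ^ 2 * ℓ))) := by
          field_simp
          ring
      _ ≤ 0 := mul_nonpos_of_nonneg_of_nonpos (by positivity) (by linarith)

end Entropy

section Heat

variable {n : ℕ} {f : EuclideanSpace ℝ (Fin n) → ℝ}

lemma mul_laplacian_log (hd : Differentiable ℝ f) (hd' : Differentiable ℝ (fderiv ℝ f))
    (hpos : ∀ y, 0 < f y) (y : EuclideanSpace ℝ (Fin n)) :
    f y * laplacian n (fun z => Real.log (f z)) y =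
      ∑ i, (fderiv ℝ (fderiv ℝ f) y (EuclideanSpace.single i 1) (EuclideanSpace.single i 1) -
        fderiv ℝ f y (EuclideanSpace.single i 1) ^ 2 / f y) := by
  have h1 : fderiv ℝ (fun z => Real.log (f z)) = fun z => (f z)⁻¹ • fderiv ℝ f z :=
    funext fun z => ((hd z).hasFDerivAt.log (hpos z).ne').fderiv
  have h2 := ((hasDerivAt_inv (hpos y).ne').comp_hasFDerivAt y (hd y).hasFDerivAt).fun_smul
    (hd' y).hasFDerivAt
  have h3 : fderiv ℝ (fun z => (f z)⁻¹ • fderiv ℝ f z) y = _ := h2.fderiv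
  rw [laplacian, h1, h3, Finset.mul_sum]
  refine Finset.sum_congr rfl fun i _ => ?_
  have := (hpos y).ne'
  simp
  field_simp
  ring

lemma laplacian_heat (hf : IsBddC1 f) (hf' : IsBddC1 (fderiv ℝ f)) {t : ℝ} (ht : 0 < t)
    (x : EuclideanSpace ℝ (Fin n)) :
    laplacian n (heat n t f) x = ∑ i, gaussAvg (fun y => fderiv ℝ (fderiv ℝ f) y
      (EuclideanSpace.single i 1) (EuclideanSpace.single i 1)) √(2 * t) x := by
  have h0 : heat n t f = gaussAvg f √(2 * t) := funext fun x => heat_eq_integral_stdGaussian ht f x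
  have h1 : fderiv ℝ (gaussAvg f √(2 * t)) = gaussAvg (fderiv ℝ f) √(2 * t) :=
    funext fun z => (hasFDerivAt_gaussAvg hf _ z).fderiv
  rw [laplacian, h0, h1, (hasFDerivAt_gaussAvg hf' _ x).fderiv]
  refine Finset.sum_congr rfl fun i _ => ?_
  have hi := integrable_of_bound hf'.continuous_fderiv hf'.bound_fderiv √(2 * t) x
  rw [gaussAvg_fderiv_apply hf'.continuous_fderiv hf'.bound_fderiv]
  exact ContinuousLinearMap.integral_apply
    (hi.apply_continuousLinearMap (EuclideanSpace.single i 1)) _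

end Heat

theorem dimensional_local_logSobolev_heat (n : ℕ) (hn : 1 ≤ n)
    (f : EuclideanSpace ℝ (Fin n) → ℝ) (hf : ContDiff ℝ (⊤ : ℕ∞) f)
    (a b : ℝ) (ha : 0 < a) (hab : ∀ x, a ≤ f x ∧ f x ≤ b)
    (C₁ C₂ : ℝ) (hder : ∀ x, ‖fderiv ℝ f x‖ ≤ C₁ ∧ ‖iteratedFDeriv ℝ 2 f x‖ ≤ C₂)
    (t : ℝ) (ht : 0 < t) (x : EuclideanSpace ℝ (Fin n)) :
    0 < 1 - (2 * t / n) *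
        (heat n t (fun y => f y * laplacian n (fun z => Real.log (f z)) y) x / heat n t f x) ∧
    heat n t (fun y => f y * Real.log (f y)) x - heat n t f x * Real.log (heat n t f x) ≤
      t * laplacian n (heat n t f) x + (n / 2) * heat n t f x *
        Real.log (1 - (2 * t / n) *
          (heat n t (fun y => f y * laplacian n (fun z => Real.log (f z)) y) x
            / heat n t f x)) := by
  have hpos (y) : 0 < f y := ha.trans_le (hab y).1
  have hc2 : √(2 * t) ^ 2 = 2 * t := Real.sq_sqrt (by positivity)
  have hf1 : IsBddC1 f := ⟨hf.of_le (by exact_mod_cast le_top), ⟨b, fun y => by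
    rw [Real.norm_of_nonneg (hpos y).le]; exact (hab y).2⟩, ⟨C₁, fun y => (hder y).1⟩⟩
  have hf2 : IsBddC1 (fderiv ℝ f) := by
    refine ⟨hf.fderiv_right (by norm_cast), ⟨C₁, fun y => (hder y).1⟩,
      ⟨C₂, fun y => ?_⟩⟩
    rw [← norm_iteratedFDeriv_one, norm_iteratedFDeriv_fderiv]
    exact (hder y).2
  have hlap := laplacian_heat hf1 hf2 ht x
  set c := √(2 * t) with hc
  have hne : Nonempty (Fin n) := ⟨⟨0, hn⟩⟩
  have hg1 := hf1.comp_add_smul x c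
  have hfd : fderiv ℝ (fun w => f (x + c • w)) = fun w => c • fderiv ℝ f (x + c • w) :=
    funext fun w => fderiv_comp_add_smul hf1.differentiable x c w
  have hg2 : IsBddC1 (fderiv ℝ fun w => f (x + c • w)) := by
    rw [hfd]; exact (hf2.comp_add_smul x c).const_smul c
  have hi1 (i : Fin n) := integrable_of_bound
    (continuous_sq_div hf1 ha (fun y => (hab y).1) (EuclideanSpace.single i 1))
    (bound_sq_div hf1 ha (fun y => (hab y).1) (EuclideanSpace.single i 1)) c x
  have hi2 (i : Fin n) := ((integrable_of_bound hf2.continuous_fderiv hf2.bound_fderiv c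
    x).apply_continuousLinearMap (EuclideanSpace.single i 1)).apply_continuousLinearMap
      (EuclideanSpace.single i 1)
  have hA (i : Fin n) : ∫ w, fderiv ℝ (fun w => f (x + c • w)) w
      (EuclideanSpace.basisFun (Fin n) ℝ i) ^ 2 / f (x + c • w) ∂(stdGaussian (EuclideanSpace ℝ (Fin n))) =
      2 * t * gaussAvg (fun y => fderiv ℝ f y (EuclideanSpace.single i 1) ^ 2 / f y) c x := by
    rw [gaussAvg, ← integral_const_mul, hfd]
    congr 1 with w
    rw [← hc2]
    simp
    ring
  have hD (i : Fin n) : ∫ w, fderiv ℝ (fun y => fderiv ℝ (fun w => f (x + c • w)) y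
      (EuclideanSpace.basisFun (Fin n) ℝ i)) w (EuclideanSpace.basisFun (Fin n) ℝ i)
        ∂(stdGaussian (EuclideanSpace ℝ (Fin n))) =
      2 * t * gaussAvg (fun y => fderiv ℝ (fderiv ℝ f) y (EuclideanSpace.single i 1)
        (EuclideanSpace.single i 1)) c x := by
    rw [gaussAvg, ← integral_const_mul]
    congr 1 with w
    rw [fderiv_fderiv_apply hg2.differentiable, hfd,
      fderiv_fun_const_smul ((hf2.comp_add_smul x c).differentiable w),
      fderiv_comp_add_smul hf2.differentiable, ← hc2]
    simp
    ring
  have hH : heat n t (fun y => f y * laplacian n (fun z => Real.log (f z)) y) x =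
      ∑ i, gaussAvg (fun y => fderiv ℝ (fderiv ℝ f) y (EuclideanSpace.single i 1)
        (EuclideanSpace.single i 1)) c x -
      ∑ i, gaussAvg (fun y => fderiv ℝ f y (EuclideanSpace.single i 1) ^ 2 / f y) c x := by
    rw [heat_eq_integral_stdGaussian ht]
    simp_rw [mul_laplacian_log hf1.differentiable hf2.differentiable hpos]
    rw [← Finset.sum_sub_distrib]
    refine (integral_finsetSum _ fun i _ => (hi2 i).sub (hi1 i)).trans ?_
    exact Finset.sum_congr rfl fun i _ => integral_sub (hi2 i) (hi1 i)
  have main := dimensional_logSobolev_stdGaussian (EuclideanSpace.basisFun (Fin n) ℝ) hg1 ha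
    (fun w => (hab _).1) hg2 rfl rfl rfl
  simp_rw [hA, hD, ← Finset.mul_sum, Fintype.card_fin] at main
  rw [hH, hlap, heat_eq_integral_stdGaussian ht f, heat_eq_integral_stdGaussian ht
    (fun y => f y * Real.log (f y))]
  set D := ∑ i, gaussAvg (fun y => fderiv ℝ (fderiv ℝ f) y (EuclideanSpace.single i 1)
    (EuclideanSpace.single i 1)) c x
  set A := ∑ i, gaussAvg (fun y => fderiv ℝ f y (EuclideanSpace.single i 1) ^ 2 / f y) c x
  set F := ∫ w, f (x + c • w) ∂(stdGaussian (EuclideanSpace ℝ (Fin n)))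
  have hscale : 2 * t / n * ((D - A) / F) = (2 * t * D - 2 * t * A) / (n * F) := by
    rw [div_mul_div_comm, mul_sub]
  rw [hscale, show t * D = 2 * t * D / 2 by ring]
  exact main
end

section
/- Let n ≥ 1 and let f : ℝ^n → ℝ be a smooth function with 0 < a ≤ f ≤ b for some constants a, b and with bounded first and second derivatives. Then for every t > 0 and every x ∈ ℝ^n one has 1 + (2t/n) · Δ(log P_t f)(x) > 0 (the Li–Yau inequality) and P_t(f log f)(x) − P_t f(x) · log P_t f(x) ≥ t · Δ(P_t f)(x) − (n/2) · P_t f(x) · log( 1 + (2t/n) · Δ(log P_t f)(x) ) (reverse dimensional local logarithmic Sobolev inequality for the Euclidean heat semigroup). -/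
open MeasureTheory Real

lemma sq_mul_exp_le {κ : ℝ} (hκ : 0 < κ) (r : ℝ) :
    r ^ 2 * Real.exp (-(2 * κ) * r ^ 2) ≤ κ⁻¹ * Real.exp (-κ * r ^ 2) := by
  have h := Real.add_one_le_exp (κ * r ^ 2)
  have h2 : Real.exp (-(2 * κ) * r ^ 2) = Real.exp (-κ * r ^ 2) * Real.exp (-κ * r ^ 2) := by
    rw [← Real.exp_add]; ring_nf
  have h3 : Real.exp (κ * r ^ 2) * Real.exp (-κ * r ^ 2) = 1 := by
    rw [← Real.exp_add]; simp
  have h4 : κ * r ^ 2 * Real.exp (-κ * r ^ 2) ≤ 1 := by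
    rw [← h3]; gcongr; linarith
  rw [h2]
  calc _ = κ⁻¹ * (κ * r ^ 2 * Real.exp (-κ * r ^ 2)) * Real.exp (-κ * r ^ 2) := by field_simp
    _ ≤ κ⁻¹ * 1 * Real.exp (-κ * r ^ 2) := by gcongr
    _ = _ := by ring

lemma one_add_sq_mul_exp_le {κ : ℝ} (hκ : 0 < κ) (r : ℝ) :
    (1 + r ^ 2) * Real.exp (-κ * r ^ 2) ≤ (1 + (κ / 2)⁻¹) * Real.exp (-(κ / 2) * r ^ 2) := by
  have h := sq_mul_exp_le (half_pos hκ) r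
  have h1 : Real.exp (-κ * r ^ 2) ≤ Real.exp (-(κ / 2) * r ^ 2) := by
    gcongr; linarith
  rw [mul_div_cancel₀ κ two_ne_zero] at h
  linarith

section InnerProductSpace

variable {E : Type*} [NormedAddCommGroup E] [InnerProductSpace ℝ E]

section Integration

variable [FiniteDimensional ℝ E] [MeasurableSpace E] [BorelSpace E]

lemma integrable_exp_neg_mul_sq_norm {κ : ℝ} (hκ : 0 < κ) :
    Integrable (fun u : E => Real.exp (-κ * ‖u‖ ^ 2)) := by
  by_contra h
  have := GaussianFourier.integral_rexp_neg_mul_sq_norm (V := E) hκ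
  rw [integral_undef h] at this
  have : 0 < (π / κ) ^ (Module.finrank ℝ E / 2 : ℝ) := by positivity
  linarith

lemma integrable_smul_kernel {G : Type*} [NormedAddCommGroup G] [NormedSpace ℝ G]
    {f : E → ℝ} (hf : Continuous f) {b : ℝ} (hb : ∀ y, |f y| ≤ b)
    {K : E → G} (hK : Continuous K) {C κ : ℝ} (hκ : 0 < κ)
    (hKC : ∀ u, ‖K u‖ ≤ C * Real.exp (-κ * ‖u‖ ^ 2)) (x : E) :
    Integrable (fun y => f y • K (x - y)) := by
  have h := (((integrable_exp_neg_mul_sq_norm hκ).comp_sub_left x).const_mul (b * C))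
  refine h.mono' (by fun_prop) (Filter.Eventually.of_forall fun y => ?_)
  rw [norm_smul, Real.norm_eq_abs, mul_assoc]
  have := (abs_nonneg _).trans (hb y)
  gcongr
  · exact hb y
  · exact hKC _

lemma hasFDerivAt_integral_smul_kernel {G : Type*} [NormedAddCommGroup G] [NormedSpace ℝ G]
    {f : E → ℝ} (hf : Continuous f) {b : ℝ} (hb : ∀ y, |f y| ≤ b)
    {K : E → G} {K' : E → E →L[ℝ] G} (hK : ∀ u, HasFDerivAt K (K' u) u) (hK' : Continuous K')
    {C C' κ κ' : ℝ} (hκ : 0 < κ) (hκ' : 0 < κ')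
    (hKC : ∀ u, ‖K u‖ ≤ C * Real.exp (-κ * ‖u‖ ^ 2))
    (hKC' : ∀ u, ‖K' u‖ ≤ C' * Real.exp (-κ' * ‖u‖ ^ 2)) (x : E) :
    HasFDerivAt (fun z => ∫ y, f y • K (z - y)) (∫ y, f y • K' (x - y)) x := by
  have hKc : Continuous K := continuous_iff_continuousAt.2 fun u => (hK u).continuousAt
  have hb0 : 0 ≤ b := (abs_nonneg _).trans (hb 0)
  have hC0 : 0 ≤ C' := by
    have := (norm_nonneg _).trans (hKC' 0)
    simpa using this
  refine hasFDerivAt_integral_of_dominated_of_fderiv_le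
    (bound := fun y => b * (C' * Real.exp κ') * Real.exp (-(κ' / 2) * ‖x - y‖ ^ 2))
    (F' := fun z y => f y • K' (z - y))
    (Metric.ball_mem_nhds x one_pos) (Filter.Eventually.of_forall fun z => ?_)
    (integrable_smul_kernel hf hb hKc hκ hKC x) ?_ (Filter.Eventually.of_forall fun y z hz => ?_)
    (((integrable_exp_neg_mul_sq_norm (half_pos hκ')).comp_sub_left x).const_mul _)
    (Filter.Eventually.of_forall fun y z _ => ?_)
  · exact (by fun_prop : Continuous fun y => f y • K (z - y)).aestronglyMeasurable
  · exact (by fun_prop : Continuous fun y => f y • K' (x - y)).aestronglyMeasurable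
  · rw [norm_smul, Real.norm_eq_abs, mul_assoc]
    have h1 : ‖x - y‖ ≤ ‖z - y‖ + 1 := by
      have := norm_add_le (z - y) (x - z)
      rw [← dist_eq_norm x z, dist_comm] at this
      have h2 := Metric.mem_ball.1 hz
      have h3 : z - y + (x - z) = x - y := by abel
      rw [h3] at this
      linarith
    have h2 : ‖x - y‖ ^ 2 ≤ 2 * ‖z - y‖ ^ 2 + 2 := by
      nlinarith [norm_nonneg (x - y), norm_nonneg (z - y), sq_nonneg (‖z - y‖ - 1)]
    refine mul_le_mul (hb y) ((hKC' _).trans ?_) (norm_nonneg _) hb0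
    rw [mul_assoc, ← Real.exp_add]
    gcongr
    nlinarith
  · have := (hK (z - y)).comp z ((hasFDerivAt_id z).sub_const y)
    exact this.const_smul (f y)

end Integration

variable (E) in
/-- The real inner product as a continuous bilinear map. -/
noncomputable def innerCLM : E →L[ℝ] E →L[ℝ] ℝ := innerSL ℝ

lemma innerCLM_apply (u v : E) : innerCLM E u v = inner ℝ u v := rfl

lemma norm_innerCLM_apply (u : E) : ‖innerCLM E u‖ = ‖u‖ := innerSL_apply_norm ℝ u

/-- The derivative of the Gaussian `u ↦ exp (-κ ‖u‖²)`. -/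
noncomputable def gaussKernelFDeriv (κ : ℝ) (u : E) : E →L[ℝ] ℝ :=
  (-(2 * κ) * Real.exp (-κ * ‖u‖ ^ 2)) • (innerCLM E u)

/-- The second derivative of the Gaussian `u ↦ exp (-κ ‖u‖²)`. -/
noncomputable def gaussKernelFDeriv2 (κ : ℝ) (u : E) : E →L[ℝ] E →L[ℝ] ℝ :=
  (-(2 * κ) * Real.exp (-κ * ‖u‖ ^ 2)) • innerCLM E +
    ((-(2 * κ)) • gaussKernelFDeriv κ u).smulRight (innerCLM E u)

lemma hasFDerivAt_gaussKernel (κ : ℝ) (u : E) :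
    HasFDerivAt (fun u : E => Real.exp (-κ * ‖u‖ ^ 2)) (gaussKernelFDeriv κ u) u := by
  have h := (((hasStrictFDerivAt_norm_sq u).hasFDerivAt).const_mul (-κ)).exp
  convert h using 1
  ext v
  simp only [gaussKernelFDeriv, innerCLM_apply, _root_.smul_apply, smul_eq_mul,
    innerSL_apply_apply, nsmul_eq_mul]
  push_cast
  ring

lemma hasFDerivAt_gaussKernelFDeriv (κ : ℝ) (u : E) :
    HasFDerivAt (gaussKernelFDeriv κ : E → _) (gaussKernelFDeriv2 κ u) u := by
  exact ((hasFDerivAt_gaussKernel κ u).const_mul (-(2 * κ))).smul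
    (innerCLM E).hasFDerivAt

lemma continuous_gaussKernelFDeriv2 (κ : ℝ) : Continuous (gaussKernelFDeriv2 κ : E → _) := by
  have h : ContDiff ℝ 1 (gaussKernelFDeriv κ : E → _) :=
    ((contDiff_const.mul (contDiff_const.mul (contDiff_norm_sq ℝ)).exp).smul
      (innerCLM E).contDiff)
  convert h.continuous_fderiv one_ne_zero using 1
  exact funext fun u => (hasFDerivAt_gaussKernelFDeriv κ u).fderiv.symm

lemma norm_gaussKernelFDeriv_le {κ : ℝ} (hκ : 0 < κ) (u : E) :
    ‖gaussKernelFDeriv κ u‖ ≤ (2 * κ * (1 + (κ / 2)⁻¹)) * Real.exp (-(κ / 2) * ‖u‖ ^ 2) := by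
  rw [gaussKernelFDeriv, norm_smul, norm_innerCLM_apply, norm_mul, Real.norm_eq_abs, Real.norm_eq_abs,
    abs_neg, abs_of_pos (by positivity), abs_of_pos (Real.exp_pos _), mul_assoc, mul_assoc (2 * κ)]
  refine mul_le_mul_of_nonneg_left (le_trans ?_ (one_add_sq_mul_exp_le hκ ‖u‖)) (by positivity)
  rw [mul_comm]
  gcongr
  nlinarith [sq_nonneg (‖u‖ - 1)]

lemma norm_gaussKernelFDeriv2_le {κ : ℝ} (hκ : 0 < κ) (u : E) :
    ‖gaussKernelFDeriv2 κ u‖ ≤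
      ((2 * κ + (2 * κ) ^ 2) * (1 + (κ / 2)⁻¹)) * Real.exp (-(κ / 2) * ‖u‖ ^ 2) := by
  have h1 : ‖innerCLM E‖ ≤ 1 := norm_innerSL_le ℝ
  have h2 := one_add_sq_mul_exp_le hκ ‖u‖
  have he := Real.exp_pos (-κ * ‖u‖ ^ 2)
  have h3 : ‖gaussKernelFDeriv2 κ u‖ ≤
      2 * κ * Real.exp (-κ * ‖u‖ ^ 2) * 1 +
      (2 * κ) * (2 * κ * Real.exp (-κ * ‖u‖ ^ 2) * ‖u‖) * ‖u‖ := by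
    refine (ContinuousLinearMap.opNorm_add_le _ _).trans (add_le_add ?_ ?_)
    · rw [norm_smul, norm_mul, norm_neg, Real.norm_of_nonneg (by positivity : 0 ≤ 2 * κ),
        Real.norm_of_nonneg he.le]
      gcongr
    · rw [ContinuousLinearMap.norm_smulRight_apply, gaussKernelFDeriv, norm_smul, norm_smul,
        norm_innerCLM_apply, norm_mul, norm_neg, Real.norm_of_nonneg (by positivity : 0 ≤ 2 * κ),
        Real.norm_of_nonneg he.le]
  refine h3.trans ?_
  rw [mul_assoc (2 * κ + (2 * κ) ^ 2)]
  refine le_trans ?_ (mul_le_mul_of_nonneg_left h2 (by positivity))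
  have : 0 ≤ 2 * κ * ‖u‖ ^ 2 * Real.exp (-κ * ‖u‖ ^ 2) := by positivity
  have : 0 ≤ (2 * κ) ^ 2 * Real.exp (-κ * ‖u‖ ^ 2) := by positivity
  nlinarith

end InnerProductSpace

section Laplacian

variable {n : ℕ}

lemma laplacian_const_mul (c : ℝ) {F : EuclideanSpace ℝ (Fin n) → ℝ}
    {F' : EuclideanSpace ℝ (Fin n) → EuclideanSpace ℝ (Fin n) →L[ℝ] ℝ}
    {F'' : EuclideanSpace ℝ (Fin n) →L[ℝ] EuclideanSpace ℝ (Fin n) →L[ℝ] ℝ}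
    {x : EuclideanSpace ℝ (Fin n)} (hF : ∀ z, HasFDerivAt F (F' z) z) (hF' : HasFDerivAt F' F'' x) :
    laplacian n (fun z => c * F z) x =
      c * ∑ i, F'' (EuclideanSpace.single i 1) (EuclideanSpace.single i 1) := by
  have h : fderiv ℝ (fun z => c * F z) = fun z => c • F' z :=
    funext fun z => ((hF z).const_mul c).fderiv
  simp only [laplacian, h, (hF'.fun_const_smul c).fderiv, _root_.smul_apply,
    smul_eq_mul, Finset.mul_sum]

lemma laplacian_log_const_mul {c : ℝ} (hc : 0 < c) {F : EuclideanSpace ℝ (Fin n) → ℝ}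
    {F' : EuclideanSpace ℝ (Fin n) → EuclideanSpace ℝ (Fin n) →L[ℝ] ℝ}
    {F'' : EuclideanSpace ℝ (Fin n) →L[ℝ] EuclideanSpace ℝ (Fin n) →L[ℝ] ℝ}
    {x : EuclideanSpace ℝ (Fin n)} (hpos : ∀ z, 0 < F z)
    (hF : ∀ z, HasFDerivAt F (F' z) z) (hF' : HasFDerivAt F' F'' x) :
    laplacian n (fun z => Real.log (c * F z)) x =
      (F x)⁻¹ * ∑ i, F'' (EuclideanSpace.single i 1) (EuclideanSpace.single i 1)
        - ∑ i, (F' x (EuclideanSpace.single i 1) / F x) ^ 2 := by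
  have h : fderiv ℝ (fun z => Real.log (c * F z)) = fun z => (F z)⁻¹ • F' z := by
    funext z
    rw [(((hF z).const_mul c).log (mul_pos hc (hpos z)).ne').fderiv, smul_smul]
    congr 1
    have := (hpos z).ne'
    field_simp
  have hinv : HasFDerivAt (fun z => (F z)⁻¹) (-((F x) ^ 2)⁻¹ • F' x) x :=
    (hasDerivAt_inv (hpos x).ne').comp_hasFDerivAt x (hF x)
  have h2 := hinv.fun_smul hF'
  simp only [laplacian, h, h2.fderiv, Finset.mul_sum, ← Finset.sum_sub_distrib]
  refine Finset.sum_congr rfl fun i _ => ?_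
  simp only [_root_.add_apply, _root_.smul_apply,
    ContinuousLinearMap.smulRight_apply, smul_eq_mul]
  have := (hpos x).ne'
  field_simp
  ring

lemma gaussKernelFDeriv_single (κ : ℝ) (u : EuclideanSpace ℝ (Fin n)) (i : Fin n) :
    gaussKernelFDeriv κ u (EuclideanSpace.single i 1) =
      -(2 * κ) * (u i * Real.exp (-κ * ‖u‖ ^ 2)) := by
  simp [gaussKernelFDeriv, innerCLM_apply, EuclideanSpace.inner_single_right]
  ring

lemma gaussKernelFDeriv2_single (κ : ℝ) (u : EuclideanSpace ℝ (Fin n)) (i : Fin n) :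
    gaussKernelFDeriv2 κ u (EuclideanSpace.single i 1) (EuclideanSpace.single i 1) =
      (2 * κ) ^ 2 * (u i ^ 2 * Real.exp (-κ * ‖u‖ ^ 2)) -
        2 * κ * Real.exp (-κ * ‖u‖ ^ 2) := by
  simp [gaussKernelFDeriv2, gaussKernelFDeriv_single, innerCLM_apply,
    EuclideanSpace.inner_single_right]
  ring

end Laplacian

section Moments

variable {n : ℕ} {f : EuclideanSpace ℝ (Fin n) → ℝ} {b κ : ℝ}

lemma integrable_mul_gaussKernel (hf : Continuous f) (hb : ∀ y, |f y| ≤ b) (hκ : 0 < κ)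
    {φ : EuclideanSpace ℝ (Fin n) → ℝ} (hφ : Continuous φ) {C : ℝ}
    (hφC : ∀ u, |φ u| ≤ C * (1 + ‖u‖ ^ 2)) (x : EuclideanSpace ℝ (Fin n)) :
    Integrable (fun y => f y * (φ (x - y) * Real.exp (-κ * ‖x - y‖ ^ 2))) := by
  have hC : 0 ≤ C := by simpa using (abs_nonneg _).trans (hφC 0)
  refine integrable_smul_kernel (K := fun u => φ u * Real.exp (-κ * ‖u‖ ^ 2))
    (C := C * (1 + (κ / 2)⁻¹)) hf hb (by fun_prop) (half_pos hκ) (fun u => ?_) x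
  rw [norm_mul, Real.norm_eq_abs, Real.norm_of_nonneg (Real.exp_pos _).le, mul_assoc]
  calc _ ≤ C * (1 + ‖u‖ ^ 2) * Real.exp (-κ * ‖u‖ ^ 2) := by gcongr; exact hφC u
    _ ≤ _ := by rw [mul_assoc]; exact mul_le_mul_of_nonneg_left (one_add_sq_mul_exp_le hκ ‖u‖) hC

lemma integrable_gaussKernel (hf : Continuous f) (hb : ∀ y, |f y| ≤ b) (hκ : 0 < κ)
    (x : EuclideanSpace ℝ (Fin n)) :
    Integrable (fun y => f y * Real.exp (-κ * ‖x - y‖ ^ 2)) := by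
  simpa using integrable_mul_gaussKernel hf hb hκ (φ := fun _ => 1) (C := 1) continuous_const
    (fun u => by simp) x

lemma integrable_coord_gaussKernel (hf : Continuous f) (hb : ∀ y, |f y| ≤ b) (hκ : 0 < κ)
    (x : EuclideanSpace ℝ (Fin n)) (i : Fin n) :
    Integrable (fun y => f y * ((x - y) i * Real.exp (-κ * ‖x - y‖ ^ 2))) := by
  refine integrable_mul_gaussKernel hf hb hκ (φ := fun u => u i) (C := 1) (by fun_prop)
    (fun u => ?_) x
  have := PiLp.norm_apply_le u i
  rw [Real.norm_eq_abs] at this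
  nlinarith [sq_nonneg (‖u‖ - 1)]

lemma integrable_coord_sq_gaussKernel (hf : Continuous f) (hb : ∀ y, |f y| ≤ b) (hκ : 0 < κ)
    (x : EuclideanSpace ℝ (Fin n)) (i : Fin n) :
    Integrable (fun y => f y * ((x - y) i ^ 2 * Real.exp (-κ * ‖x - y‖ ^ 2))) := by
  refine integrable_mul_gaussKernel hf hb hκ (φ := fun u => u i ^ 2) (C := 1) (by fun_prop)
    (fun u => ?_) x
  have := PiLp.norm_apply_le u i
  rw [abs_pow, ← Real.norm_eq_abs]
  nlinarith [norm_nonneg (u i)]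

lemma integrable_normSq_sub_gaussKernel (hf : Continuous f) (hb : ∀ y, |f y| ≤ b) (hκ : 0 < κ)
    (x v : EuclideanSpace ℝ (Fin n)) :
    Integrable (fun y => f y * (‖x - y - v‖ ^ 2 * Real.exp (-κ * ‖x - y‖ ^ 2))) := by
  refine integrable_mul_gaussKernel hf hb hκ (φ := fun u => ‖u - v‖ ^ 2) (C := 2 + 2 * ‖v‖ ^ 2)
    (by fun_prop) (fun u => ?_) x
  have := norm_sub_le u v
  rw [abs_of_nonneg (by positivity)]
  nlinarith [norm_nonneg (u - v), sq_nonneg (‖u‖ - ‖v‖), sq_nonneg (‖u‖ * ‖v‖), norm_nonneg u,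
    norm_nonneg v]

lemma integral_normSq_sub_gaussKernel (hf : Continuous f) (hb : ∀ y, |f y| ≤ b) (hκ : 0 < κ)
    (x v : EuclideanSpace ℝ (Fin n)) :
    ∫ y, f y * (‖x - y - v‖ ^ 2 * Real.exp (-κ * ‖x - y‖ ^ 2)) =
      ∑ i, ((∫ y, f y * ((x - y) i ^ 2 * Real.exp (-κ * ‖x - y‖ ^ 2)))
        - 2 * v i * (∫ y, f y * ((x - y) i * Real.exp (-κ * ‖x - y‖ ^ 2)))
        + v i ^ 2 * ∫ y, f y * Real.exp (-κ * ‖x - y‖ ^ 2)) := by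
  have h0 := integrable_gaussKernel hf hb hκ x
  have h1 := integrable_coord_gaussKernel hf hb hκ x
  have h2 := integrable_coord_sq_gaussKernel hf hb hκ x
  simp_rw [← integral_const_mul]
  have h3 : ∀ i, Integrable (fun y => f y * ((x - y) i ^ 2 * Real.exp (-κ * ‖x - y‖ ^ 2))
        - 2 * v i * (f y * ((x - y) i * Real.exp (-κ * ‖x - y‖ ^ 2)))) := fun i =>
    (h2 i).sub ((h1 i).const_mul _)
  have h4 : ∀ i, Integrable (fun y => f y * ((x - y) i ^ 2 * Real.exp (-κ * ‖x - y‖ ^ 2))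
        - 2 * v i * (f y * ((x - y) i * Real.exp (-κ * ‖x - y‖ ^ 2)))
        + v i ^ 2 * (f y * Real.exp (-κ * ‖x - y‖ ^ 2))) := fun i =>
    (h3 i).add (h0.const_mul _)
  have h5 : ∀ i, ∫ y, f y * ((x - y) i ^ 2 * Real.exp (-κ * ‖x - y‖ ^ 2))
        - 2 * v i * (f y * ((x - y) i * Real.exp (-κ * ‖x - y‖ ^ 2)))
        + v i ^ 2 * (f y * Real.exp (-κ * ‖x - y‖ ^ 2)) =
      (∫ y, f y * ((x - y) i ^ 2 * Real.exp (-κ * ‖x - y‖ ^ 2))) -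
        (∫ y, 2 * v i * (f y * ((x - y) i * Real.exp (-κ * ‖x - y‖ ^ 2)))) +
        ∫ y, v i ^ 2 * (f y * Real.exp (-κ * ‖x - y‖ ^ 2)) := fun i => by
    rw [integral_add (h3 i) (h0.const_mul _), integral_sub (h2 i) ((h1 i).const_mul _)]
  refine Eq.trans ?_ (Finset.sum_congr rfl fun i _ => h5 i)
  rw [← integral_finsetSum _ fun i _ => h4 i]
  refine integral_congr_ae (Filter.Eventually.of_forall fun y => ?_)
  simp only [EuclideanSpace.norm_sq_eq (x - y - v), Real.norm_eq_abs, sq_abs, Finset.sum_mul,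
    Finset.mul_sum]
  refine Finset.sum_congr rfl fun i _ => ?_
  simp only [PiLp.sub_apply]
  ring

lemma integral_gaussKernelFDeriv_single (hf : Continuous f) (hb : ∀ y, |f y| ≤ b) (hκ : 0 < κ)
    (x : EuclideanSpace ℝ (Fin n)) (i : Fin n) :
    (∫ y, f y • gaussKernelFDeriv κ (x - y)) (EuclideanSpace.single i 1) =
      -(2 * κ) * ∫ y, f y * ((x - y) i * Real.exp (-κ * ‖x - y‖ ^ 2)) := by
  have hc : Continuous (gaussKernelFDeriv κ : EuclideanSpace ℝ (Fin n) → _) :=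
    continuous_iff_continuousAt.2 fun u => (hasFDerivAt_gaussKernelFDeriv κ u).continuousAt
  rw [ContinuousLinearMap.integral_apply (integrable_smul_kernel hf hb hc (half_pos hκ)
    (norm_gaussKernelFDeriv_le hκ) x), ← integral_const_mul]
  simp only [_root_.smul_apply, gaussKernelFDeriv_single, smul_eq_mul]
  exact integral_congr_ae (Filter.Eventually.of_forall fun y => by ring)

lemma integral_gaussKernelFDeriv2_single (hf : Continuous f) (hb : ∀ y, |f y| ≤ b) (hκ : 0 < κ)
    (x : EuclideanSpace ℝ (Fin n)) (i : Fin n) :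
    (∫ y, f y • gaussKernelFDeriv2 κ (x - y)) (EuclideanSpace.single i 1)
        (EuclideanSpace.single i 1) =
      (2 * κ) ^ 2 * (∫ y, f y * ((x - y) i ^ 2 * Real.exp (-κ * ‖x - y‖ ^ 2))) -
        2 * κ * ∫ y, f y * Real.exp (-κ * ‖x - y‖ ^ 2) := by
  have h := integrable_smul_kernel (K := gaussKernelFDeriv2 κ) hf hb (continuous_gaussKernelFDeriv2 κ) (half_pos hκ)
    (norm_gaussKernelFDeriv2_le hκ) x
  rw [ContinuousLinearMap.integral_apply h, ContinuousLinearMap.integral_apply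
    (h.apply_continuousLinearMap _), ← integral_const_mul, ← integral_const_mul, ← integral_sub
      ((integrable_coord_sq_gaussKernel hf hb hκ x i).const_mul _)
      ((integrable_gaussKernel hf hb hκ x).const_mul _)]
  simp only [_root_.smul_apply, gaussKernelFDeriv2_single, smul_eq_mul]
  exact integral_congr_ae (Filter.Eventually.of_forall fun y => by ring)

/-- The Gibbs inequality for the density proportional to `f y * exp (-κ ‖x - y‖²)` relative to the
Gaussian density centred at `x - v` with time parameter `s`. -/
lemma gibbs_gaussKernel (hf : Continuous f) (hb : ∀ y, |f y| ≤ b) (hpos : ∀ y, 0 < f y)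
    {b' : ℝ} (hb' : ∀ y, |f y * Real.log (f y)| ≤ b') (hκ : 0 < κ) {s : ℝ} (hs : 0 < s)
    {A : ℝ} (hA : 0 < A) (x v : EuclideanSpace ℝ (Fin n))
    (hAint : ∫ y, f y * Real.exp (-κ * ‖x - y‖ ^ 2) = A) :
    (Real.log A - n / 2 * Real.log (4 * π * s)) * A
      - (4 * s)⁻¹ * (∫ y, f y * (‖x - y - v‖ ^ 2 * Real.exp (-κ * ‖x - y‖ ^ 2)))
      + κ * (∫ y, f y * (‖x - y‖ ^ 2 * Real.exp (-κ * ‖x - y‖ ^ 2))) ≤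
    ∫ y, f y * Real.log (f y) * Real.exp (-κ * ‖x - y‖ ^ 2) := by
  have hs4 : 0 < (4 * s)⁻¹ := by positivity
  have hπs : 0 < 4 * π * s := by positivity
  set L : ℝ := Real.log A - n / 2 * Real.log (4 * π * s) with hL
  have i0 := integrable_gaussKernel hf hb hκ x
  have iV := integrable_normSq_sub_gaussKernel hf hb hκ x v
  have iM : Integrable (fun y => f y * (‖x - y‖ ^ 2 * Real.exp (-κ * ‖x - y‖ ^ 2))) := by
    simpa using integrable_normSq_sub_gaussKernel hf hb hκ x 0
  have iG : Integrable (fun y => Real.exp (-(4 * s)⁻¹ * ‖x - y - v‖ ^ 2)) := by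
    have := (integrable_exp_neg_mul_sq_norm (E := EuclideanSpace ℝ (Fin n)) hs4).comp_sub_left
      (x - v)
    simpa [sub_right_comm] using this
  have hG : ∫ y, Real.exp (-(4 * s)⁻¹ * ‖x - y - v‖ ^ 2) = (4 * π * s) ^ ((n : ℝ) / 2) := by
    have h1 := integral_sub_left_eq_self
      (fun u : EuclideanSpace ℝ (Fin n) => Real.exp (-(4 * s)⁻¹ * ‖u‖ ^ 2)) volume (x - v)
    rw [GaussianFourier.integral_rexp_neg_mul_sq_norm hs4] at h1
    simp only [sub_right_comm x v] at h1
    rw [h1, finrank_euclideanSpace_fin]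
    congr 1
    field_simp
  have iE : Integrable (fun y => f y * Real.log (f y) * Real.exp (-κ * ‖x - y‖ ^ 2)) :=
    integrable_gaussKernel (f := fun y => f y * Real.log (f y))
      (hf.mul (hf.log fun y => (hpos y).ne')) hb' hκ x
  have hexpL : Real.exp L * (4 * π * s) ^ ((n : ℝ) / 2) = A := by
    rw [hL, Real.rpow_def_of_pos hπs, ← Real.exp_add,
      show Real.log A - n / 2 * Real.log (4 * π * s) + Real.log (4 * π * s) * (n / 2) = Real.log A
        by ring, Real.exp_log hA]
  have key : ∀ y, L * (f y * Real.exp (-κ * ‖x - y‖ ^ 2))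
      - (4 * s)⁻¹ * (f y * (‖x - y - v‖ ^ 2 * Real.exp (-κ * ‖x - y‖ ^ 2)))
      + κ * (f y * (‖x - y‖ ^ 2 * Real.exp (-κ * ‖x - y‖ ^ 2)))
      + f y * Real.exp (-κ * ‖x - y‖ ^ 2)
      - Real.exp L * Real.exp (-(4 * s)⁻¹ * ‖x - y - v‖ ^ 2) ≤
      f y * Real.log (f y) * Real.exp (-κ * ‖x - y‖ ^ 2) := fun y => by
    set K := Real.exp (-κ * ‖x - y‖ ^ 2) with hK
    have hKpos : 0 < K := Real.exp_pos _
    set q := L - (4 * s)⁻¹ * ‖x - y - v‖ ^ 2 + κ * ‖x - y‖ ^ 2 with hq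
    have h1 : Real.exp L * Real.exp (-(4 * s)⁻¹ * ‖x - y - v‖ ^ 2) = Real.exp q * K := by
      rw [hK, ← Real.exp_add, ← Real.exp_add]; congr 1; rw [hq]; ring
    have h2 := Real.add_one_le_exp (q - Real.log (f y))
    rw [Real.exp_sub, Real.exp_log (hpos y), le_div_iff₀ (hpos y)] at h2
    rw [h1]
    have h3 := mul_le_mul_of_nonneg_right h2 hKpos.le
    rw [hq] at h3 ⊢
    linarith
  have j1 := ((i0.const_mul L).sub (iV.const_mul (4 * s)⁻¹))
  have j2 := j1.add (iM.const_mul κ)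
  have j3 := j2.add i0
  have j4 := j3.sub (iG.const_mul (Real.exp L))
  have hint := integral_mono j4 iE key
  rw [integral_sub' j3 (iG.const_mul _), integral_add' j2 i0, integral_add' j1 (iM.const_mul κ),
    integral_sub' (i0.const_mul L) (iV.const_mul _), integral_const_mul, integral_const_mul,
    integral_const_mul, integral_const_mul, hG, hexpL, hAint] at hint
  linarith

end Moments

theorem reverse_dimensional_local_logSobolev_heat (n : ℕ) (hn : 1 ≤ n)
    (f : EuclideanSpace ℝ (Fin n) → ℝ) (hf : ContDiff ℝ (⊤ : ℕ∞) f)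
    (a b : ℝ) (ha : 0 < a) (hab : ∀ x, a ≤ f x ∧ f x ≤ b)
    (C₁ C₂ : ℝ) (hder : ∀ x, ‖fderiv ℝ f x‖ ≤ C₁ ∧ ‖iteratedFDeriv ℝ 2 f x‖ ≤ C₂)
    (t : ℝ) (ht : 0 < t) (x : EuclideanSpace ℝ (Fin n)) :
    0 < 1 + (2 * t / n) * laplacian n (fun z => Real.log (heat n t f z)) x ∧
    heat n t (fun y => f y * Real.log (f y)) x - heat n t f x * Real.log (heat n t f x) ≥
      t * laplacian n (heat n t f) x - (n / 2) * heat n t f x *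
        Real.log (1 + (2 * t / n) * laplacian n (fun z => Real.log (heat n t f z)) x) := by
  have hfc : Continuous f := hf.continuous
  have hpos : ∀ y, 0 < f y := fun y => ha.trans_le (hab y).1
  have hb : ∀ y, |f y| ≤ b := fun y => by rw [abs_of_pos (hpos y)]; exact (hab y).2
  have hb' : ∀ y, |f y * Real.log (f y)| ≤ b * (|Real.log a| + |Real.log b|) := fun y => by
    have h1 := Real.log_le_log ha (hab y).1
    have h2 := Real.log_le_log (hpos y) (hab y).2
    have h3 : |Real.log (f y)| ≤ |Real.log a| + |Real.log b| := by
      rw [abs_le]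
      constructor
      · linarith [neg_abs_le (Real.log a), abs_nonneg (Real.log b)]
      · linarith [le_abs_self (Real.log b), abs_nonneg (Real.log a)]
    rw [abs_mul]
    exact mul_le_mul (hb y) h3 (abs_nonneg _) ((abs_nonneg _).trans (hb y))
  have hn0 : (0 : ℝ) < n := by exact_mod_cast hn
  obtain ⟨κ, hκdef⟩ : ∃ κ : ℝ, κ = (4 * t)⁻¹ := ⟨_, rfl⟩
  have hκ : 0 < κ := by rw [hκdef]; positivity
  have hheat : ∀ g : EuclideanSpace ℝ (Fin n) → ℝ, heat n t g = fun z =>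
      (4 * π * t) ^ (-(n : ℝ) / 2) * ∫ y, g y * Real.exp (-κ * ‖z - y‖ ^ 2) := fun g => by
    funext z
    have h (y : EuclideanSpace ℝ (Fin n)) : -‖z - y‖ ^ 2 / (4 * t) = -κ * ‖z - y‖ ^ 2 := by
      rw [hκdef]; ring
    simp only [heat, if_neg ht.ne', h]
  have hπt : 0 < 4 * π * t := by positivity
  have hc : 0 < (4 * π * t) ^ (-(n : ℝ) / 2) := by positivity
  have hlogc : Real.log ((4 * π * t) ^ (-(n : ℝ) / 2)) = -(n : ℝ) / 2 * Real.log (4 * π * t) :=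
    Real.log_rpow hπt _
  simp only [hheat]
  generalize (4 * π * t) ^ (-(n : ℝ) / 2) = c at hc hlogc ⊢
  have hApos : ∀ z, 0 < ∫ y, f y * Real.exp (-κ * ‖z - y‖ ^ 2) := fun z =>
    integral_pos_of_integrable_nonneg_nonzero (x := z) (by fun_prop)
      (integrable_gaussKernel hfc hb hκ z)
      (fun y => (mul_pos (hpos y) (Real.exp_pos _)).le) (mul_pos (hpos z) (Real.exp_pos _)).ne'
  have hK (z : EuclideanSpace ℝ (Fin n)) := hasFDerivAt_integral_smul_kernel
    (K := fun u => Real.exp (-κ * ‖u‖ ^ 2)) (K' := gaussKernelFDeriv κ) (C := 1) hfc hb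
    (hasFDerivAt_gaussKernel κ)
    (continuous_iff_continuousAt.2 fun u => (hasFDerivAt_gaussKernelFDeriv κ u).continuousAt)
    hκ (half_pos hκ) (fun u => by simp) (norm_gaussKernelFDeriv_le hκ) z
  have hK' := hasFDerivAt_integral_smul_kernel
    (K := gaussKernelFDeriv κ) (K' := gaussKernelFDeriv2 κ) hfc hb
    (hasFDerivAt_gaussKernelFDeriv κ) (continuous_gaussKernelFDeriv2 κ)
    (half_pos hκ) (half_pos hκ) (norm_gaussKernelFDeriv_le hκ) (norm_gaussKernelFDeriv2_le hκ) x
  simp only [smul_eq_mul] at hK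
  rw [laplacian_log_const_mul hc hApos hK hK', laplacian_const_mul c hK hK']
  simp only [integral_gaussKernelFDeriv_single hfc hb hκ,
    integral_gaussKernelFDeriv2_single hfc hb hκ]
  obtain ⟨A, hA⟩ : ∃ A, ∫ y, f y * Real.exp (-κ * ‖x - y‖ ^ 2) = A := ⟨_, rfl⟩
  obtain ⟨B, hB⟩ : ∃ B : Fin n → ℝ, ∀ i,
      ∫ y, f y * ((x - y) i * Real.exp (-κ * ‖x - y‖ ^ 2)) = B i := ⟨_, fun _ => rfl⟩
  obtain ⟨S, hS⟩ : ∃ S : Fin n → ℝ, ∀ i,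
      ∫ y, f y * ((x - y) i ^ 2 * Real.exp (-κ * ‖x - y‖ ^ 2)) = S i := ⟨_, fun _ => rfl⟩
  have hA0 : 0 < A := hA ▸ hApos x
  let v : EuclideanSpace ℝ (Fin n) := WithLp.toLp 2 fun i => B i / A
  have hV := integral_normSq_sub_gaussKernel hfc hb hκ x v
  have hM := integral_normSq_sub_gaussKernel hfc hb hκ x 0
  simp only [hA, hB, hS] at hV hM ⊢
  have hM' : ∫ y, f y * (‖x - y‖ ^ 2 * Real.exp (-κ * ‖x - y‖ ^ 2)) = ∑ i, S i := by
    simpa using hM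
  have hV' : ∫ y, f y * (‖x - y - v‖ ^ 2 * Real.exp (-κ * ‖x - y‖ ^ 2)) =
      ∑ i, S i - A * ∑ i, (B i / A) ^ 2 := by
    rw [hV, Finset.mul_sum, ← Finset.sum_sub_distrib]
    refine Finset.sum_congr rfl fun i _ => ?_
    simp only [v]
    field_simp
    ring
  have hVpos : 0 < ∫ y, f y * (‖x - y - v‖ ^ 2 * Real.exp (-κ * ‖x - y‖ ^ 2)) := by
    have : Nonempty (Fin n) := ⟨⟨0, hn⟩⟩
    obtain ⟨e, he⟩ := exists_ne (0 : EuclideanSpace ℝ (Fin n))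
    refine integral_pos_of_integrable_nonneg_nonzero (x := x - v - e) (by fun_prop)
      (integrable_normSq_sub_gaussKernel hfc hb hκ x v)
      (fun y => mul_nonneg (hpos y).le (by positivity)) ?_
    have h : x - (x - v - e) - v = e := by abel
    rw [h]
    have := hpos (x - v - e)
    positivity
  have hr : 1 + 2 * t / n * (A⁻¹ * ∑ i, ((2 * κ) ^ 2 * S i - 2 * κ * A) -
      ∑ i, (-(2 * κ) * B i / A) ^ 2) =
      (∑ i, S i - A * ∑ i, (B i / A) ^ 2) / (2 * t * n * A) := by
    have h : ∑ i, (-(2 * κ) * B i / A) ^ 2 = (2 * κ) ^ 2 * ∑ i, (B i / A) ^ 2 := by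
      rw [Finset.mul_sum]
      exact Finset.sum_congr rfl fun i _ => by ring
    rw [h, Finset.sum_sub_distrib, ← Finset.mul_sum, Finset.sum_const, Finset.card_univ,
      Fintype.card_fin, nsmul_eq_mul, hκdef]
    field_simp
    ring
  rw [hr, Finset.sum_sub_distrib, ← Finset.mul_sum, Finset.sum_const, Finset.card_univ,
      Fintype.card_fin, nsmul_eq_mul]
  rw [hV'] at hVpos
  obtain ⟨r, hrdef⟩ : ∃ r, r = (∑ i, S i - A * ∑ i, (B i / A) ^ 2) / (2 * t * n * A) := ⟨_, rfl⟩
  have hr0 : 0 < r := by rw [hrdef]; positivity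
  rw [← hrdef]
  refine ⟨hr0, ?_⟩
  have hg := gibbs_gaussKernel hfc hb hpos hb' hκ (mul_pos ht hr0) hA0 x v hA
  have hVr : ∑ i, S i - A * ∑ i, (B i / A) ^ 2 = 2 * t * n * A * r := by
    rw [hrdef]; field_simp
  rw [hV', hM', hVr, ← mul_assoc (4 * π), Real.log_mul hπt.ne' hr0.ne'] at hg
  have h1 : (4 * (t * r))⁻¹ * (2 * t * n * A * r) = n / 2 * A := by
    field_simp; norm_num
  rw [h1] at hg
  have hg' := mul_le_mul_of_nonneg_left hg hc.le
  rw [Real.log_mul hc.ne' hA0.ne', hlogc]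
  have h2 : t * (c * ((2 * κ) ^ 2 * ∑ i, S i - n * (2 * κ * A))) =
      c * (κ * ∑ i, S i) - c * (n / 2 * A) := by
    rw [hκdef]; field_simp; ring
  rw [h2]
  linarith
end
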